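/- If V is a Borel divergence-free vector field on [0,T] × ℝ^d with ∫₀ᵀ‖V_t‖_∞ dt < ∞, then for each S ∈ [0,T] and Lebesgue-almost every x ∈ ℝ^d, there exists a solution γ of the ODE γ' = V(t,γ) on [0,T] with γ(S) = x. -/

import Mathlib

open MeasureTheory Set
open scoped ENNReal NNReal Topology

noncomputable section

/-- A solution of the ODE `γ' = V(t,γ)` on `[0,T]`, in integral form. -/
def IsSolution {d : ℕ} (T : ℝ) (hT : 0 ≤ T)
    (V : ℝ → EuclideanSpace ℝ (Fin d) → EuclideanSpace ℝ (Fin d))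
    (γ : C(Set.Icc (0:ℝ) T, EuclideanSpace ℝ (Fin d))) : Prop :=
  ∀ t : Set.Icc (0:ℝ) T,
    γ t - γ ⟨0, Set.left_mem_Icc.mpr hT⟩ =
      ∫ s in (0:ℝ)..(t:ℝ), V s (γ (Set.projIcc 0 T hT s))

/-!
Mollified in space, a divergence-free field dominated by `m t` is Lipschitz at rate a multiple of
`m t`, and its Euler polygons are compositions of maps `id + U` with `U` small in `C¹` and
divergence-free. As the trace of `fderiv ℝ U` vanishes, the determinant of `id + fderiv ℝ U` is
`1` up to an arbitrarily small multiple of the size of `U`, so fine polygons compress the measure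
at most by the factor `e`, whatever the mollification scale. Integrals of a space-time function
`g` along the polygons are therefore bounded in `L¹` by `∫ g`.

By the Vitali–Carathéodory theorem `g` can be taken integrable and lower semicontinuous,
dominating weighted mollification errors, and infinite on a given null set `N`. For almost every
starting point the integral of `g` stays bounded along a subsequence of polygons, which by
Arzelà–Ascoli converges to a curve with finite `g`-integral. The mollification errors then vanish
in the limit, and this curve solves the equation and avoids `N` at almost all times; so `N` may
contain the points where the original field exceeds its essential supremum. Running time
forwards and backwards from `S` gives solutions through `S`.
-/

open Filter Convolution ContDiff

section Determinant

theorem hasFDerivAt_matrix_det_one {ι 𝕜 : Type*} [Fintype ι] [DecidableEq ι]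
    [NontriviallyNormedField 𝕜] :
    HasFDerivAt (fun M : ι → ι → 𝕜 => (Matrix.of M).det)
      (∑ i, (ContinuousLinearMap.proj i : (ι → 𝕜) →L[𝕜] 𝕜) ∘L ContinuousLinearMap.proj i)
      (1 : Matrix ι ι 𝕜) := by
  let f : ContinuousMultilinearMap 𝕜 (fun _ : ι => ι → 𝕜) 𝕜 :=
    { Matrix.detRowAlternating.toMultilinearMap with
      cont := by
        change Continuous fun M : Matrix ι ι 𝕜 => M.det
        fun_prop }
  refine (f.hasFDerivAt (1 : Matrix ι ι 𝕜)).congr_fderiv ?_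
  ext M : 1
  have hdet (i : ι) : f (Function.update (1 : Matrix ι ι 𝕜) i (M i)) = M i i := by
    change (Matrix.updateRow 1 i (M i)).det = M i i
    rw [← Matrix.cramer_transpose_apply, Matrix.transpose_one, Matrix.cramer_one]
    rfl
  simpa [hdet] using f.linearDeriv_apply (1 : Matrix ι ι 𝕜) M

theorem hasFDerivAt_det_one {𝕜 E : Type*} [NontriviallyNormedField 𝕜] [CompleteSpace 𝕜]
    [NormedAddCommGroup E] [NormedSpace 𝕜 E] [FiniteDimensional 𝕜 E] :
    HasFDerivAt (ContinuousLinearMap.det : (E →L[𝕜] E) → 𝕜)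
      (LinearMap.toContinuousLinearMap (LinearMap.trace 𝕜 E ∘ₗ ContinuousLinearMap.coeLM 𝕜)) 1 := by
  let b := Module.finBasis 𝕜 E
  let toMatrix : (E →L[𝕜] E) →L[𝕜] Fin _ → Fin _ → 𝕜 := LinearMap.toContinuousLinearMap
    ((LinearMap.toMatrix b b).toLinearMap ∘ₗ ContinuousLinearMap.coeLM 𝕜)
  have hone : toMatrix 1 = (1 : Matrix _ _ 𝕜) := LinearMap.toMatrix_one b
  have hdet : (fun A => (Matrix.of (toMatrix A)).det) =
      (ContinuousLinearMap.det : (E →L[𝕜] E) → 𝕜) :=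
    funext fun A => LinearMap.det_toMatrix b (A : E →ₗ[𝕜] E)
  have hcomp : HasFDerivAt (fun A => (Matrix.of (toMatrix A)).det) _ 1 :=
    (hone ▸ hasFDerivAt_matrix_det_one).comp 1 toMatrix.hasFDerivAt
  refine (hdet ▸ hcomp).congr_fderiv ?_
  ext A
  have htrace : LinearMap.trace 𝕜 E A = ∑ i, toMatrix A i i :=
    LinearMap.trace_eq_matrix_trace 𝕜 b A
  simp [htrace]

theorem exists_one_sub_le_det_one_add {E : Type*} [NormedAddCommGroup E] [NormedSpace ℝ E]
    [FiniteDimensional ℝ E] {η : ℝ} (hη : 0 < η) :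
    ∃ r > 0, ∀ A : E →L[ℝ] E, ‖A‖ ≤ r → LinearMap.trace ℝ E A = 0 →
      1 - η * ‖A‖ ≤ (1 + A).det := by
  have h := hasFDerivAt_iff_isLittleO_nhds_zero.1 (hasFDerivAt_det_one (𝕜 := ℝ) (E := E))
  obtain ⟨r, hr, hball⟩ := Metric.nhds_basis_closedBall.eventually_iff.1 (h.def hη)
  refine ⟨r, hr, fun A hA htrace => ?_⟩
  have hlin : ‖(1 + A).det - 1‖ ≤ η * ‖A‖ := by
    simpa [htrace, ContinuousLinearMap.det] using hball (mem_closedBall_zero_iff.2 hA)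
  linarith [(abs_le.1 hlin).1]

end Determinant

section ChangeOfVariables

theorem injective_id_add_of_lipschitzWith {E : Type*} [NormedAddCommGroup E] {K : ℝ≥0}
    {g : E → E} (hg : LipschitzWith K g) (hK : K < 1) : Function.Injective fun x => x + g x :=
  (AntilipschitzWith.id.add_lipschitzWith hg (by simpa using hK)).injective

theorem one_sub_half_inv_le_exp {t : ℝ} (ht₀ : 0 ≤ t) (ht₁ : t ≤ 1) :
    (1 - t / 2)⁻¹ ≤ Real.exp t := by
  rw [inv_le_iff_one_le_mul₀ (by linarith)]
  nlinarith [Real.add_one_le_exp t]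

variable {E : Type*} [NormedAddCommGroup E] [NormedSpace ℝ E] [FiniteDimensional ℝ E]
  [MeasurableSpace E] [BorelSpace E] {μ : Measure E} [μ.IsAddHaarMeasure]

theorem map_le_smul_of_le_abs_det {f : E → E} {f' : E → E →L[ℝ] E}
    (hf' : ∀ x, HasFDerivAt f (f' x) x) (hf : Function.Injective f) {c : ℝ} (hc : 0 < c)
    (hdet : ∀ x, c ≤ |(f' x).det|) : μ.map f ≤ ENNReal.ofReal c⁻¹ • μ := by
  have hfm : Measurable f :=
    (continuous_iff_continuousAt.2 fun x => (hf' x).continuousAt).measurable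
  refine Measure.le_iff.2 fun s hs => ?_
  have himage : ENNReal.ofReal c * μ (f ⁻¹' s) ≤ μ s := by
    calc ENNReal.ofReal c * μ (f ⁻¹' s)
        = ∫⁻ _ in f ⁻¹' s, ENNReal.ofReal c ∂μ := by simp
      _ ≤ ∫⁻ x in f ⁻¹' s, ENNReal.ofReal |(f' x).det| ∂μ :=
          lintegral_mono fun x => ENNReal.ofReal_le_ofReal (hdet x)
      _ = μ (f '' (f ⁻¹' s)) := lintegral_abs_det_fderiv_eq_addHaar_image μ (hfm hs)
          (fun x _ => (hf' x).hasFDerivWithinAt) hf.injOn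
      _ ≤ μ s := measure_mono (image_preimage_subset _ _)
  rw [Measure.map_apply hfm hs, Measure.smul_apply, smul_eq_mul, ENNReal.ofReal_inv_of_pos hc,
    mul_comm, ← div_eq_mul_inv, ENNReal.le_div_iff_mul_le (by simp [hc]) (by simp), mul_comm]
  exact himage

variable (μ) in
theorem exists_map_id_add_le_exp {η : ℝ} (hη : 0 < η) :
    ∃ r > 0, ∀ (g : E → E) (ε : ℝ), Differentiable ℝ g →
      (∀ x, LinearMap.trace ℝ E (fderiv ℝ g x) = 0) → (∀ x, ‖fderiv ℝ g x‖ ≤ ε) → ε ≤ r →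
      μ.map (fun x => x + g x) ≤ ENNReal.ofReal (Real.exp (η * ε)) • μ := by
  obtain ⟨r, hr, hdet⟩ := exists_one_sub_le_det_one_add (E := E) (half_pos hη)
  refine ⟨min r (min (1 / 2) (1 / η)), by positivity, fun g ε hg htrace hε hεr => ?_⟩
  simp only [le_min_iff, le_div_iff₀ hη] at hεr
  obtain ⟨hεr, hε_half, hηε⟩ := hεr
  have hε₀ : 0 ≤ ε := (norm_nonneg _).trans (hε 0)
  have hinj : Function.Injective fun x => x + g x :=
    injective_id_add_of_lipschitzWith
      (lipschitzWith_of_nnnorm_fderiv_le (C := ⟨ε, hε₀⟩) hg fun x => hε x)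
      (NNReal.coe_lt_coe.1 (show ε < 1 by linarith))
  have hlower (x : E) : 1 - η * ε / 2 ≤ |(1 + fderiv ℝ g x).det| :=
    calc 1 - η * ε / 2 = 1 - η / 2 * ε := by ring
      _ ≤ 1 - η / 2 * ‖fderiv ℝ g x‖ := by gcongr; exact hε x
      _ ≤ (1 + fderiv ℝ g x).det := hdet _ ((hε x).trans hεr) (htrace x)
      _ ≤ |(1 + fderiv ℝ g x).det| := le_abs_self _
  calc μ.map (fun x => x + g x) ≤ ENNReal.ofReal (1 - η * ε / 2)⁻¹ • μ :=
        map_le_smul_of_le_abs_det (fun x => (hasFDerivAt_id x).add (hg x).hasFDerivAt) hinj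
          (by linarith) hlower
    _ ≤ ENNReal.ofReal (Real.exp (η * ε)) • μ := by
        gcongr
        exact one_sub_half_inv_le_exp (by positivity) (by linarith)

end ChangeOfVariables

section Mollification

theorem fderiv_const_sub_comp {𝕜 E F : Type*} [NontriviallyNormedField 𝕜] [NormedAddCommGroup E]
    [NormedSpace 𝕜 E] [NormedAddCommGroup F] [NormedSpace 𝕜 F] {f : E → F}
    (hf : Differentiable 𝕜 f) (x y : E) :
    fderiv 𝕜 (fun y => f (x - y)) y = -fderiv 𝕜 f (x - y) :=
  ((hf (x - y)).hasFDerivAt.comp y ((hasFDerivAt_id y).const_sub x)).fderiv.trans (by ext; simp)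

theorem locallyIntegrable_of_norm_le {X F : Type*} [TopologicalSpace X] [MeasurableSpace X]
    [NormedAddCommGroup F] {μ : Measure X} [IsLocallyFiniteMeasure μ] {U : X → F}
    (hU : AEStronglyMeasurable U μ) {δ : ℝ} (hδ : ∀ x, ‖U x‖ ≤ δ) : LocallyIntegrable U μ :=
  (memLp_top_of_bound hU δ (ae_of_all _ hδ)).locallyIntegrable le_top

variable {E F : Type*} [NormedAddCommGroup E] [NormedSpace ℝ E] [MeasurableSpace E]
  [NormedAddCommGroup F] [NormedSpace ℝ F] {μ : Measure E}

/-- A vector field is divergence-free in the sense of distributions. -/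
def IsDivFree (μ : Measure E) (U : E → E) : Prop :=
  ∀ u : E → ℝ, ContDiff ℝ ∞ u → HasCompactSupport u → ∫ x, fderiv ℝ u x (U x) ∂μ = 0

theorem IsDivFree.const_smul {U : E → E}
    (hU : IsDivFree μ U) (e : ℝ) : IsDivFree μ fun x => e • U x := by
  intro u hu huc
  simp only [map_smul, smul_eq_mul, integral_const_mul, hU u hu huc, mul_zero]

theorem IsDivFree.congr_ae {U U' : E → E} (hU : IsDivFree μ U) (h : U =ᵐ[μ] U') :
    IsDivFree μ U' := fun u hu huc =>
  (integral_congr_ae (h.mono fun x hx => by rw [hx])).trans (hU u hu huc)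

theorem isDivFree_zero : IsDivFree μ fun _ => 0 := fun u _ _ => by simp

/-- A smoothing kernel: a smooth compactly supported probability density. -/
structure IsMollifier (μ : Measure E) (ρ : E → ℝ) : Prop where
  contDiff : ContDiff ℝ ∞ ρ
  hasCompactSupport : HasCompactSupport ρ
  nonneg : ∀ z, 0 ≤ ρ z
  integral_eq_one : ∫ z, ρ z ∂μ = 1

/-- The mollification `ρ ∗ U` of a vector field `U` by a scalar kernel `ρ`. -/
def mollify (μ : Measure E) (ρ : E → ℝ) (U : E → F) : E → F :=
  ρ ⋆[ContinuousLinearMap.lsmul ℝ ℝ, μ] U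

theorem norm_mollify_le {ρ : E → ℝ} (hρ : IsMollifier μ ρ) {U : E → F} {δ : ℝ}
    (hU : ∀ x, ‖U x‖ ≤ δ) (x : E) : ‖mollify μ ρ U x‖ ≤ δ :=
  calc ‖mollify μ ρ U x‖ ≤ ∫ z, ρ z * δ ∂μ := by
        refine norm_integral_le_of_norm_le
          ((integrable_of_integral_eq_one hρ.integral_eq_one).mul_const δ) (ae_of_all _ fun z => ?_)
        rw [ContinuousLinearMap.lsmul_apply, norm_smul, Real.norm_of_nonneg (hρ.nonneg z)]
        exact mul_le_mul_of_nonneg_left (hU _) (hρ.nonneg z)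
    _ = δ := by rw [integral_mul_const, hρ.integral_eq_one, one_mul]

variable [BorelSpace E] [FiniteDimensional ℝ E] [μ.IsAddHaarMeasure]

section Bounds

variable {ρ : E → ℝ} (hρ : ContDiff ℝ 1 ρ) (hρc : HasCompactSupport ρ)

include hρ hρc

theorem integrable_fderiv_smulRight {U : E → F} (hU : LocallyIntegrable U μ)
    (x : E) :
    Integrable (fun z => (fderiv ℝ ρ z).smulRight (U (x - z))) μ :=
  hρc.fderiv (𝕜 := ℝ) |>.convolutionExists_left
    ((ContinuousLinearMap.lsmul ℝ ℝ : ℝ →L[ℝ] F →L[ℝ] F).precompL E)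
    (hρ.continuous_fderiv one_ne_zero) hU x

theorem hasFDerivAt_mollify {U : E → F} (hU : LocallyIntegrable U μ) (x : E) :
    HasFDerivAt (mollify μ ρ U) (∫ z, (fderiv ℝ ρ z).smulRight (U (x - z)) ∂μ) x :=
  hρc.hasFDerivAt_convolution_left (ContinuousLinearMap.lsmul ℝ ℝ) hρ hU x

theorem norm_fderiv_mollify_le {U : E → F} (hU : LocallyIntegrable U μ) {δ : ℝ}
    (hδ : ∀ x, ‖U x‖ ≤ δ) (x : E) :
    ‖fderiv ℝ (mollify μ ρ U) x‖ ≤ (∫ z, ‖fderiv ℝ ρ z‖ ∂μ) * δ := by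
  rw [(hasFDerivAt_mollify hρ hρc hU x).fderiv, ← integral_mul_const]
  have hint : Integrable (fderiv ℝ ρ) μ :=
    (hρ.continuous_fderiv one_ne_zero).integrable_of_hasCompactSupport (hρc.fderiv (𝕜 := ℝ))
  refine norm_integral_le_of_norm_le (hint.norm.mul_const δ) (ae_of_all _ fun z => ?_)
  rw [ContinuousLinearMap.norm_smulRight_apply]
  gcongr
  exact hδ _

theorem norm_mollify_sub_le {U : E → F} (hU : LocallyIntegrable U μ) {δ : ℝ}
    (hδ : ∀ x, ‖U x‖ ≤ δ) (x y : E) :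
    ‖mollify μ ρ U x - mollify μ ρ U y‖ ≤ (∫ z, ‖fderiv ℝ ρ z‖ ∂μ) * δ * ‖x - y‖ :=
  convex_univ.norm_image_sub_le_of_norm_fderiv_le
    (fun z _ => (hasFDerivAt_mollify hρ hρc hU z).differentiableAt)
    (fun z _ => norm_fderiv_mollify_le hρ hρc hU hδ z) (mem_univ y) (mem_univ x)

end Bounds

theorem trace_fderiv_mollify {ρ : E → ℝ} (hρ : ContDiff ℝ ∞ ρ) (hρc : HasCompactSupport ρ)
    {U : E → E} (hU : LocallyIntegrable U μ) (hdiv : IsDivFree μ U) (x : E) :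
    LinearMap.trace ℝ E (fderiv ℝ (mollify μ ρ U) x) = 0 := by
  let trace : (E →L[ℝ] E) →L[ℝ] ℝ := LinearMap.toContinuousLinearMap
    (LinearMap.trace ℝ E ∘ₗ ContinuousLinearMap.coeLM ℝ)
  have hρ₁ : ContDiff ℝ 1 ρ := hρ.of_le (by simp)
  have htest : ∫ y, fderiv ℝ ρ (x - y) (U y) ∂μ = 0 := by
    have h := hdiv (fun y => ρ (x - y)) (hρ.comp (contDiff_const.sub contDiff_id))
      (hρc.comp_homeomorph (Homeomorph.subLeft x))
    simpa [fderiv_const_sub_comp (hρ₁.differentiable one_ne_zero), integral_neg] using h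
  calc LinearMap.trace ℝ E (fderiv ℝ (mollify μ ρ U) x)
      = trace (∫ z, (fderiv ℝ ρ z).smulRight (U (x - z)) ∂μ) := by
        rw [(hasFDerivAt_mollify hρ₁ hρc hU x).fderiv]; rfl
    _ = ∫ z, trace ((fderiv ℝ ρ z).smulRight (U (x - z))) ∂μ :=
        (trace.integral_comp_comm (integrable_fderiv_smulRight hρ₁ hρc hU x)).symm
    _ = ∫ z, fderiv ℝ ρ z (U (x - z)) ∂μ :=
        integral_congr_ae (ae_of_all _ fun z => LinearMap.trace_smulRight _ _)
    _ = ∫ y, fderiv ℝ ρ (x - y) (U y) ∂μ := by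
        rw [← integral_sub_left_eq_self _ μ x]
        simp only [sub_sub_cancel]
    _ = 0 := htest

theorem exists_map_id_add_mollify_le_exp {ρ : E → ℝ} (hρ : ContDiff ℝ ∞ ρ)
    (hρc : HasCompactSupport ρ) {η : ℝ} (hη : 0 < η) :
    ∃ δ₀ > 0, ∀ (U : E → E) (δ : ℝ), LocallyIntegrable U μ → IsDivFree μ U → (∀ x, ‖U x‖ ≤ δ) →
      δ ≤ δ₀ → μ.map (fun x => x + mollify μ ρ U x) ≤ ENNReal.ofReal (Real.exp (η * δ)) • μ := by
  set L := ∫ z, ‖fderiv ℝ ρ z‖ ∂μ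
  have hL : 0 ≤ L := integral_nonneg fun _ => norm_nonneg _
  have hρ₁ : ContDiff ℝ 1 ρ := hρ.of_le (by simp)
  obtain ⟨r, hr, hmap⟩ := exists_map_id_add_le_exp μ (show 0 < η / (L + 1) by positivity)
  refine ⟨r / (L + 1), by positivity, fun U δ hU hdiv hδ hδr => ?_⟩
  have hδ₀ : 0 ≤ δ := (norm_nonneg _).trans (hδ 0)
  have hconst : η / (L + 1) * ((L + 1) * δ) = η * δ := by field_simp
  rw [← hconst]
  refine hmap _ _ (fun x => (hasFDerivAt_mollify hρ₁ hρc hU x).differentiableAt)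
    (trace_fderiv_mollify hρ hρc hU hdiv) (fun x => ?_) ?_
  · exact (norm_fderiv_mollify_le hρ₁ hρc hU hδ x).trans (by gcongr; linarith)
  · rwa [le_div_iff₀' (by positivity)] at hδr

end Mollification

section SpeedBound

variable {α : Type*} [PseudoMetricSpace α] {m : ℝ → ℝ} {γ : ℝ → α}

/-- The curve `γ` has metric speed at most `m`, in integrated form; along such curves all
equicontinuity comes from the primitive of `m`. -/
def HasSpeedLE (m : ℝ → ℝ) (γ : ℝ → α) : Prop :=
  ∀ ⦃r s⦄, r ≤ s → dist (γ r) (γ s) ≤ ∫ τ in r..s, m τ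

theorem HasSpeedLE.dist_le_abs_integral (hγ : HasSpeedLE m γ) (r s : ℝ) :
    dist (γ r) (γ s) ≤ |∫ τ in r..s, m τ| := by
  rcases le_total r s with hrs | hsr
  · exact (hγ hrs).trans (le_abs_self _)
  · rw [dist_comm, intervalIntegral.integral_symm, abs_neg]
    exact (hγ hsr).trans (le_abs_self _)

theorem HasSpeedLE.dist_le_integral (hγ : HasSpeedLE m γ) (hm : Integrable m)
    (hm₀ : ∀ t, 0 ≤ m t) (r s : ℝ) : dist (γ r) (γ s) ≤ ∫ τ, m τ := by
  refine (hγ.dist_le_abs_integral r s).trans ?_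
  rw [intervalIntegral.abs_integral_eq_abs_integral_uIoc, abs_of_nonneg (integral_nonneg hm₀)]
  exact setIntegral_le_integral hm (ae_of_all _ hm₀)

theorem HasSpeedLE.of_le_of_ge {a : ℝ} (hm : ∀ r s, IntervalIntegrable m volume r s)
    (hleft : ∀ ⦃r s⦄, r ≤ s → s ≤ a → dist (γ r) (γ s) ≤ ∫ τ in r..s, m τ)
    (hright : ∀ ⦃r s⦄, a ≤ r → r ≤ s → dist (γ r) (γ s) ≤ ∫ τ in r..s, m τ) :
    HasSpeedLE m γ := by
  intro r s hrs
  rcases le_total s a with hsa | has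
  · exact hleft hrs hsa
  rcases le_total a r with har | hra
  · exact hright har hrs
  calc dist (γ r) (γ s) ≤ dist (γ r) (γ a) + dist (γ a) (γ s) := dist_triangle _ _ _
    _ ≤ (∫ τ in r..a, m τ) + ∫ τ in a..s, m τ :=
        add_le_add (hleft hra le_rfl) (hright le_rfl has)
    _ = ∫ τ in r..s, m τ := intervalIntegral.integral_add_adjacent_intervals (hm r a) (hm a s)

variable (α) in
theorem equicontinuous_hasSpeedLE (hm : ∀ r s, IntervalIntegrable m volume r s) :
    Equicontinuous fun γ : {γ : ℝ → α // HasSpeedLE m γ} => γ.1 := fun r =>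
  Metric.equicontinuousAt_of_continuity_modulus (fun s => |∫ τ in r..s, m τ|)
    (by simpa using ((intervalIntegral.continuous_primitive hm r).abs).tendsto r) _
    (Eventually.of_forall fun s γ => γ.2.dist_le_abs_integral r s)

theorem HasSpeedLE.continuous (hγ : HasSpeedLE m γ)
    (hm : ∀ r s, IntervalIntegrable m volume r s) : Continuous γ :=
  (equicontinuous_hasSpeedLE α hm).continuous ⟨γ, hγ⟩

theorem isCompact_hasSpeedLE (hm : ∀ r s, IntervalIntegrable m volume r s) {K : Set α}
    (hK : IsCompact K) :
    IsCompact {γ : C(ℝ, α) | (∀ t, γ t ∈ K) ∧ HasSpeedLE m γ} := by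
  refine ArzelaAscoli.isCompact_of_equicontinuous _ ?_ ?_
  · have himage : ContinuousMap.toFun '' {γ : C(ℝ, α) | (∀ t, γ t ∈ K) ∧ HasSpeedLE m γ} =
        univ.pi (fun _ => K) ∩ {γ | HasSpeedLE m γ} := by
      ext γ
      refine ⟨?_, fun hγ => ⟨⟨γ, hγ.2.continuous hm⟩, ⟨fun t => hγ.1 t trivial, hγ.2⟩, rfl⟩⟩
      rintro ⟨γ, hγ, rfl⟩
      exact ⟨fun t _ => hγ.1 t, hγ.2⟩
    rw [himage]
    refine (isCompact_univ_pi fun _ => hK).inter_right ?_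
    simp only [HasSpeedLE, ofPred_forall]
    exact isClosed_iInter fun r => isClosed_iInter fun s => isClosed_iInter fun _ =>
      isClosed_le ((continuous_apply r).dist (continuous_apply s)) continuous_const
  · exact (equicontinuous_hasSpeedLE α hm).comp
      fun γ : {γ : C(ℝ, α) | (∀ t, γ t ∈ K) ∧ HasSpeedLE m γ} => ⟨γ.1, γ.2.2⟩

theorem exists_subseq_tendsto_of_hasSpeedLE (hm : ∀ r s, IntervalIntegrable m volume r s)
    {K : Set α} (hK : IsCompact K) {γ : ℕ → ℝ → α} (hγ : ∀ n, HasSpeedLE m (γ n))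
    (hγK : ∀ n t, γ n t ∈ K) :
    ∃ (φ : ℕ → ℕ) (β : ℝ → α), StrictMono φ ∧ Continuous β ∧
      ∀ t, Tendsto (fun n => γ (φ n) t) atTop (𝓝 (β t)) := by
  obtain ⟨β, -, φ, hφ, hlim⟩ := (isCompact_hasSpeedLE hm hK).tendsto_subseq
    (x := fun n => ⟨γ n, (hγ n).continuous hm⟩) fun n => ⟨hγK n, hγ n⟩
  exact ⟨φ, β, hφ, β.continuous, fun t => ((continuous_eval_const t).tendsto β).comp hlim⟩

end SpeedBound

section Domination

variable {E F : Type*} [MeasurableSpace E] [NormedAddCommGroup F] [MeasurableSpace F]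

/-- The time-dependent field `W` is bounded in space by an integrable function `m` of time. -/
structure IsDominated (W : ℝ → E → F) (m : ℝ → ℝ) : Prop where
  measurable : Measurable (Function.uncurry W)
  integrable : Integrable m
  norm_le : ∀ t x, ‖W t x‖ ≤ m t

namespace IsDominated

variable {W : ℝ → E → F} {m : ℝ → ℝ}

theorem nonneg [Nonempty E] (hW : IsDominated W m) (t : ℝ) : 0 ≤ m t :=
  (norm_nonneg _).trans (hW.norm_le t (Classical.arbitrary E))

theorem intervalIntegrable (hW : IsDominated W m) (r s : ℝ) : IntervalIntegrable m volume r s :=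
  hW.integrable.intervalIntegrable

theorem integral_nonneg [Nonempty E] (hW : IsDominated W m) {r s : ℝ} (hrs : r ≤ s) :
    0 ≤ ∫ τ in r..s, m τ :=
  intervalIntegral.integral_nonneg hrs fun t _ => hW.nonneg t

theorem integral_mono_interval [Nonempty E] (hW : IsDominated W m) {a b c d : ℝ} (hca : c ≤ a)
    (hab : a ≤ b) (hbd : b ≤ d) : ∫ τ in a..b, m τ ≤ ∫ τ in c..d, m τ :=
  intervalIntegral.integral_mono_interval hca hab hbd (Eventually.of_forall hW.nonneg)
    (hW.intervalIntegrable _ _)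

theorem norm_integral_comp_le [NormedSpace ℝ F] (hW : IsDominated W m) (γ : ℝ → E) {r s : ℝ}
    (hrs : r ≤ s) : ‖∫ τ in r..s, W τ (γ τ)‖ ≤ ∫ τ in r..s, m τ :=
  intervalIntegral.norm_integral_le_of_norm_le hrs
    (Eventually.of_forall fun τ _ => hW.norm_le τ _) (hW.intervalIntegrable _ _)

variable [SecondCountableTopology F] [BorelSpace F]

theorem integrable_comp (hW : IsDominated W m) {γ : ℝ → E} (hγ : Measurable γ) :
    Integrable fun r => W r (γ r) :=
  hW.integrable.mono' (hW.measurable.comp (measurable_id.prodMk hγ)).aestronglyMeasurable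
    (ae_of_all _ fun r => hW.norm_le r _)

theorem intervalIntegrable_comp (hW : IsDominated W m) {γ : ℝ → E} (hγ : Measurable γ) (r s : ℝ) :
    IntervalIntegrable (fun τ => W τ (γ τ)) volume r s :=
  (hW.integrable_comp hγ).intervalIntegrable

variable [NormedSpace ℝ F]

theorem measurable_timeIntegral (hW : IsDominated W m) (r s : ℝ) :
    Measurable fun x => ∫ τ in r..s, W τ x := by
  have hswap : StronglyMeasurable (Function.uncurry fun x τ => W τ x) :=
    (hW.measurable.comp measurable_swap).stronglyMeasurable
  simp only [intervalIntegral]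
  exact (hswap.integral_prod_right (ν := volume.restrict (Ioc r s))).measurable.sub
    (hswap.integral_prod_right (ν := volume.restrict (Ioc s r))).measurable

theorem mollify [NormedAddCommGroup E] [NormedSpace ℝ E]
    [BorelSpace E] [SecondCountableTopology E] {μ : Measure E}
    [SFinite μ] {ρ : E → ℝ} (hW : IsDominated W m) (hρ : IsMollifier μ ρ) :
    IsDominated (fun t => mollify μ ρ (W t)) m where
  measurable := by
    have hjoint : Measurable fun q : (ℝ × E) × E => ρ q.2 • W q.1.1 (q.1.2 - q.2) :=
      (hρ.contDiff.continuous.measurable.comp measurable_snd).smul (hW.measurable.comp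
        ((measurable_fst.comp measurable_fst).prodMk
          ((measurable_snd.comp measurable_fst).sub measurable_snd)))
    exact (hjoint.stronglyMeasurable.integral_prod_right' (ν := μ)).measurable
  integrable := hW.integrable
  norm_le t := norm_mollify_le hρ (hW.norm_le t)

theorem mollify_timeIntegral [NormedAddCommGroup E] [BorelSpace E] [SecondCountableTopology E]
    {μ : Measure E} [SFinite μ] {ρ : E → ℝ} (hW : IsDominated W m) (hρ : Integrable ρ μ) {r s : ℝ}
    (hrs : r ≤ s) (x : E) :
    _root_.mollify μ ρ (fun y => ∫ τ in r..s, W τ y) x =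
      ∫ τ in r..s, _root_.mollify μ ρ (W τ) x := by
  simp only [_root_.mollify, convolution, ContinuousLinearMap.lsmul_apply,
    intervalIntegral.integral_of_le hrs, ← integral_smul]
  rw [integral_integral_swap]
  refine (hρ.norm.mul_prod hW.integrable.restrict).mono' ?_ (ae_of_all _ fun p => ?_)
  · exact hρ.1.comp_fst.smul (hW.measurable.comp
      (measurable_snd.prodMk (measurable_const.sub measurable_fst))).aestronglyMeasurable
  · simp only [Function.uncurry, norm_smul]
    gcongr
    exact hW.norm_le _ _

end IsDominated

theorem IsDominated.isDivFree_timeIntegral {E : Type*} [NormedAddCommGroup E]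
    [NormedSpace ℝ E] [FiniteDimensional ℝ E] [MeasurableSpace E] [BorelSpace E] {μ : Measure E}
    [SFinite μ] [IsFiniteMeasureOnCompacts μ] {W : ℝ → E → E} {m : ℝ → ℝ}
    (hW : IsDominated W m) (hdiv : ∀ᵐ t, IsDivFree μ (W t)) {r s : ℝ} (hrs : r ≤ s) :
    IsDivFree μ fun x => ∫ τ in r..s, W τ x := by
  intro u hu huc
  have hu' : Continuous (fderiv ℝ u) := hu.continuous_fderiv (by simp)
  have hint : Integrable (fderiv ℝ u) μ :=
    hu'.integrable_of_hasCompactSupport (huc.fderiv (𝕜 := ℝ))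
  have hprod : Integrable (Function.uncurry fun x τ => fderiv ℝ u x (W τ x))
      (μ.prod (volume.restrict (Ioc r s))) := by
    refine (hint.norm.mul_prod hW.integrable.restrict).mono' ?_ (ae_of_all _ fun p => ?_)
    · exact (ContinuousLinearMap.measurable_apply₂.comp
        ((hu'.measurable.comp measurable_fst).prodMk
          (hW.measurable.comp measurable_swap))).aestronglyMeasurable
    · exact ((fderiv ℝ u p.1).le_opNorm _).trans (by gcongr; exact hW.norm_le _ _)
  calc ∫ x, fderiv ℝ u x (∫ τ in r..s, W τ x) ∂μ
      = ∫ x, (∫ τ in Ioc r s, fderiv ℝ u x (W τ x)) ∂μ := by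
        refine integral_congr_ae (ae_of_all _ fun x => ?_)
        beta_reduce
        rw [intervalIntegral.integral_of_le hrs,
          (fderiv ℝ u x).integral_comp_comm (hW.integrable_comp measurable_const).restrict]
    _ = ∫ τ in Ioc r s, (∫ x, fderiv ℝ u x (W τ x) ∂μ) := integral_integral_swap hprod
    _ = 0 := integral_eq_zero_of_ae
        (ae_restrict_of_ae (hdiv.mono fun τ hτ => hτ u hu huc))

end Domination

section EulerScheme

theorem exists_monotone_dist_lt {α : Type*} [PseudoMetricSpace α] {F : ℝ → α} (hF : Continuous F)
    {a b : ℝ} (hab : a ≤ b) {δ : ℝ} (hδ : 0 < δ) :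
    ∃ t : ℕ → ℝ, t 0 = a ∧ Monotone t ∧ (∃ N, t N = b) ∧
      ∀ n, dist (F (t n)) (F (t (n + 1))) < δ := by
  obtain ⟨t, ht₀, htm, ⟨N, hN⟩, ht⟩ := exists_monotone_Icc_subset_open_cover_Icc hab
    (c := fun y : α => (fun s : Icc a b => F s) ⁻¹' Metric.ball y (δ / 2))
    (fun y => Metric.isOpen_ball.preimage (hF.comp continuous_subtype_val))
    fun s _ => mem_iUnion.2 ⟨F s, Metric.mem_ball_self (half_pos hδ)⟩
  refine ⟨fun n => t n, ht₀, fun i j hij => htm hij, ⟨N, hN N le_rfl⟩, fun n => ?_⟩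
  obtain ⟨y, hy⟩ := ht n
  have hn : dist (F (t n)) y < δ / 2 := hy ⟨le_rfl, htm n.le_succ⟩
  have hn' : dist (F (t (n + 1))) y < δ / 2 := hy ⟨htm n.le_succ, le_rfl⟩
  linarith [dist_triangle_right (F (t n)) (F (t (n + 1))) y]

variable {E : Type*} [NormedAddCommGroup E] [NormedSpace ℝ E] {b : ℝ → E → E} {m : ℝ → ℝ}
  {c L a a' : ℝ} {γ : ℝ → E}

/-- The curve which follows `γ` up to time `a` and then moves with the velocities that `b` takes at
the fixed point `γ a`. -/
def eulerExtend (b : ℝ → E → E) (a : ℝ) (γ : ℝ → E) (s : ℝ) : E :=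
  γ (min s a) + ∫ r in (min s a)..s, b r (γ (min s a))

theorem eulerExtend_of_le {s : ℝ} (hs : s ≤ a) : eulerExtend b a γ s = γ s := by
  simp [eulerExtend, hs]

theorem eulerExtend_of_ge {s : ℝ} (hs : a ≤ s) :
    eulerExtend b a γ s = γ a + ∫ r in a..s, b r (γ a) := by
  simp [eulerExtend, hs]

/-- On `[0, a]` the curve `γ` solves the integral equation of `b` up to an error of at most `c`
times the integral of `m`. -/
def IsApproxSolution (b : ℝ → E → E) (m : ℝ → ℝ) (c a : ℝ) (γ : ℝ → E) : Prop :=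
  ∀ s ∈ Icc 0 a, ‖γ s - γ 0 - ∫ r in (0 : ℝ)..s, b r (γ r)‖ ≤ c * ∫ τ in (0 : ℝ)..s, m τ

variable [MeasurableSpace E] [BorelSpace E] [SecondCountableTopology E]

theorem HasSpeedLE.eulerExtend (hb : IsDominated b m) (hγ : HasSpeedLE m γ) :
    HasSpeedLE m (eulerExtend b a γ) := by
  refine .of_le_of_ge hb.intervalIntegrable (a := a) (fun r s hrs hsa => ?_) fun r s har hrs => ?_
  · rw [eulerExtend_of_le hsa, eulerExtend_of_le (hrs.trans hsa)]
    exact hγ hrs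
  · have hint := hb.intervalIntegrable_comp (measurable_const (a := γ a))
    rw [eulerExtend_of_ge har, eulerExtend_of_ge (har.trans hrs), dist_add_left, dist_comm,
      dist_eq_norm, intervalIntegral.integral_interval_sub_left (hint a s) (hint a r)]
    exact hb.norm_integral_comp_le (fun _ => γ a) hrs

theorem norm_sub_sub_integral_comp_le (hb : IsDominated b m) (hγ : HasSpeedLE m γ)
    (hconst : ∀ s ∈ Icc a a', γ s - γ a = ∫ r in a..s, b r (γ a)) (hL : 0 ≤ L)
    (hlip : ∀ r y z, ‖b r y - b r z‖ ≤ L * m r * ‖y - z‖) (hc : L * ∫ τ in a..a', m τ ≤ c)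
    {s : ℝ} (hs : s ∈ Icc a a') :
    ‖γ s - γ a - ∫ r in a..s, b r (γ r)‖ ≤ c * ∫ τ in a..s, m τ := by
  have hγm : Measurable γ := (hγ.continuous hb.intervalIntegrable).measurable
  rw [hconst s hs, ← intervalIntegral.integral_sub
    (hb.intervalIntegrable_comp measurable_const _ _) (hb.intervalIntegrable_comp hγm _ _),
    ← intervalIntegral.integral_const_mul]
  refine intervalIntegral.norm_integral_le_of_norm_le hs.1 (ae_of_all _ fun r hr => ?_)
    ((hb.intervalIntegrable _ _).const_mul c)
  have hm := hb.nonneg r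
  have hdist : ‖γ a - γ r‖ ≤ ∫ τ in a..a', m τ := by
    rw [← dist_eq_norm]
    exact (hγ hr.1.le).trans (hb.integral_mono_interval le_rfl hr.1.le (hr.2.trans hs.2))
  calc ‖b r (γ a) - b r (γ r)‖ ≤ L * m r * ‖γ a - γ r‖ := hlip _ _ _
    _ ≤ L * m r * ∫ τ in a..a', m τ := by gcongr
    _ = (L * ∫ τ in a..a', m τ) * m r := by ring
    _ ≤ c * m r := by gcongr

theorem IsApproxSolution.eulerExtend (h : IsApproxSolution b m c a γ) (hb : IsDominated b m)
    (hγ : HasSpeedLE m γ) (ha : 0 ≤ a) (hL : 0 ≤ L)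
    (hlip : ∀ r y z, ‖b r y - b r z‖ ≤ L * m r * ‖y - z‖) (hc : L * ∫ τ in a..a', m τ ≤ c) :
    IsApproxSolution b m c a' (eulerExtend b a γ) := by
  have hspeed : HasSpeedLE m (_root_.eulerExtend b a γ) := hγ.eulerExtend hb
  set β := _root_.eulerExtend b a γ with hβ
  have hβm : Measurable β := (hspeed.continuous hb.intervalIntegrable).measurable
  have hpast {s : ℝ} (hs : s ∈ Icc 0 a) :
      ‖β s - β 0 - ∫ r in (0 : ℝ)..s, b r (β r)‖ ≤ c * ∫ τ in (0 : ℝ)..s, m τ := by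
    rw [hβ, eulerExtend_of_le hs.2, eulerExtend_of_le ha, intervalIntegral.integral_congr
      (g := fun r => b r (γ r)) fun r hr => ?_]
    · exact h s hs
    · rw [uIcc_of_le hs.1] at hr
      simp only [eulerExtend_of_le (hr.2.trans hs.2)]
  intro s hs
  rcases le_total s a with hsa | has
  · exact hpast ⟨hs.1, hsa⟩
  have hstep : ‖β s - β a - ∫ r in a..s, b r (β r)‖ ≤ c * ∫ τ in a..s, m τ := by
    refine norm_sub_sub_integral_comp_le hb hspeed (fun s hs => ?_) hL hlip hc ⟨has, hs.2⟩
    simp [hβ, eulerExtend_of_ge hs.1, eulerExtend_of_le le_rfl]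
  rw [← intervalIntegral.integral_add_adjacent_intervals (hb.intervalIntegrable 0 a)
    (hb.intervalIntegrable a s), mul_add, ← intervalIntegral.integral_add_adjacent_intervals
    (hb.intervalIntegrable_comp hβm 0 a) (hb.intervalIntegrable_comp hβm a s)]
  refine le_of_eq_of_le (congrArg norm ?_) (norm_add_le_of_le (hpast ⟨ha, le_rfl⟩) hstep)
  abel

/-- A flow of curves with speed at most `m` starting at time `0` whose time-`s` maps, for `s` in
`[0, a]`, compress the measure `μ` at most by the factor `C s`. -/
structure IsCompressibleFlow (μ : Measure E) (m : ℝ → ℝ) (C : ℝ → ℝ≥0∞) (a : ℝ)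
    (X : ℝ → E → E) : Prop where
  measurable : ∀ s, Measurable (X s)
  apply_zero : ∀ x, X 0 x = x
  hasSpeedLE : ∀ x, HasSpeedLE m (X · x)
  map_le : ∀ s ∈ Icc 0 a, μ.map (X s) ≤ C s • μ

variable {μ : Measure E} {C : ℝ → ℝ≥0∞} {X : ℝ → E → E}

theorem IsCompressibleFlow.eulerExtend (hX : IsCompressibleFlow μ m C a X) (hb : IsDominated b m)
    (ha : 0 ≤ a)
    (hstep : ∀ s ∈ Icc a a', C a • μ.map (fun x => x + ∫ r in a..s, b r x) ≤ C s • μ) :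
    IsCompressibleFlow μ m C a' fun s x => eulerExtend b a (X · x) s := by
  have hmeas (s : ℝ) : Measurable fun x => x + ∫ r in a..s, b r x :=
    measurable_id.add (hb.measurable_timeIntegral a s)
  have hge {s : ℝ} (has : a ≤ s) : (fun x => _root_.eulerExtend b a (X · x) s) =
      (fun x => x + ∫ r in a..s, b r x) ∘ X a := funext fun x => eulerExtend_of_ge has
  have hle {s : ℝ} (hsa : s ≤ a) : (fun x => _root_.eulerExtend b a (X · x) s) = X s :=
    funext fun x => eulerExtend_of_le hsa
  refine ⟨fun s => ?_, fun x => ?_, fun x => (hX.hasSpeedLE x).eulerExtend hb, fun s hs => ?_⟩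
  · rcases le_total s a with hsa | has
    · exact hle hsa ▸ hX.measurable s
    · exact hge has ▸ (hmeas s).comp (hX.measurable a)
  · exact (eulerExtend_of_le ha).trans (hX.apply_zero x)
  · rcases le_total s a with hsa | has
    · exact hle hsa ▸ hX.map_le s ⟨hs.1, hsa⟩
    · rw [hge has, ← Measure.map_map (hmeas s) (hX.measurable a)]
      calc (μ.map (X a)).map _ ≤ (C a • μ).map _ :=
            Measure.map_mono (hX.map_le a ⟨ha, le_rfl⟩) (hmeas s)
        _ = C a • μ.map _ := Measure.map_smul _ _ _
        _ ≤ C s • μ := hstep s ⟨has, hs.2⟩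

theorem exists_isCompressibleFlow (hb : IsDominated b m) (hL : 0 ≤ L)
    (hlip : ∀ r y z, ‖b r y - b r z‖ ≤ L * m r * ‖y - z‖) {η δ : ℝ} (hδ : 0 < δ) (hc : L * δ ≤ c)
    (hmap : ∀ r s, r ≤ s → ∫ τ in r..s, m τ ≤ δ → μ.map (fun x => x + ∫ τ in r..s, b τ x) ≤
      ENNReal.ofReal (Real.exp (η * ∫ τ in r..s, m τ)) • μ) {T : ℝ} (hT : 0 ≤ T) :
    ∃ X, IsCompressibleFlow μ m
      (fun s => ENNReal.ofReal (Real.exp (η * ∫ τ in (0 : ℝ)..s, m τ))) T X ∧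
      ∀ x, IsApproxSolution b m c T (X · x) := by
  obtain ⟨t, ht₀, htm, ⟨N, rfl⟩, ht⟩ := exists_monotone_dist_lt
    (intervalIntegral.continuous_primitive hb.intervalIntegrable 0) hT hδ
  have hstep (n : ℕ) : ∫ τ in (t n)..(t (n + 1)), m τ ≤ δ := by
    rw [← intervalIntegral.integral_interval_sub_left (hb.intervalIntegrable 0 _)
      (hb.intervalIntegrable 0 _)]
    exact (le_abs_self _).trans ((dist_comm _ _).trans_lt (ht n)).le
  clear hT ht
  induction N with
  | zero =>
    rw [ht₀]
    have hzero {s : ℝ} (hs : s ∈ Icc 0 0) : s = 0 := le_antisymm hs.2 hs.1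
    refine ⟨fun _ x => x, ⟨fun _ => measurable_id, fun _ => rfl, fun x r s hrs => ?_,
      fun s hs => ?_⟩, fun x s hs => ?_⟩
    · simpa using hb.integral_nonneg hrs
    · simp [hzero hs]
    · simp [hzero hs]
  | succ n ih =>
    obtain ⟨X, hX, herr⟩ := ih
    have htn : 0 ≤ t n := ht₀ ▸ htm n.zero_le
    refine ⟨_, hX.eulerExtend hb htn fun s hs => ?_, fun x =>
      (herr x).eulerExtend hb (hX.hasSpeedLE x) htn hL hlip
        ((mul_le_mul_of_nonneg_left (hstep n) hL).trans hc)⟩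
    have hsn : ∫ τ in (t n)..s, m τ ≤ δ :=
      (hb.integral_mono_interval le_rfl hs.1 hs.2).trans (hstep n)
    rw [← intervalIntegral.integral_add_adjacent_intervals (hb.intervalIntegrable 0 (t n))
      (hb.intervalIntegrable _ s), mul_add, Real.exp_add, ENNReal.ofReal_mul (Real.exp_nonneg _),
      mul_smul]
    gcongr
    exact hmap _ _ hs.1 hsn

end EulerScheme

section MollifiedFlow

variable {E : Type*} [NormedAddCommGroup E] [NormedSpace ℝ E] [FiniteDimensional ℝ E]
  [MeasurableSpace E] [BorelSpace E] {μ : Measure E} [μ.IsAddHaarMeasure] {W : ℝ → E → E}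
  {m : ℝ → ℝ} {ρ : E → ℝ}

theorem exists_map_id_add_integral_mollify_le_exp (hW : IsDominated W m)
    (hdiv : ∀ᵐ t, IsDivFree μ (W t)) (hρ : IsMollifier μ ρ) {η : ℝ} (hη : 0 < η) :
    ∃ δ₀ > 0, ∀ r s, r ≤ s → ∫ τ in r..s, m τ ≤ δ₀ →
      μ.map (fun x => x + ∫ τ in r..s, mollify μ ρ (W τ) x) ≤
        ENNReal.ofReal (Real.exp (η * ∫ τ in r..s, m τ)) • μ := by
  obtain ⟨δ₀, hδ₀, hmap⟩ := exists_map_id_add_mollify_le_exp (μ := μ) hρ.contDiff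
    hρ.hasCompactSupport hη
  refine ⟨δ₀, hδ₀, fun r s hrs hδ => ?_⟩
  simp only [← hW.mollify_timeIntegral (integrable_of_integral_eq_one hρ.integral_eq_one) hrs]
  have hbound (x : E) : ‖∫ τ in r..s, W τ x‖ ≤ ∫ τ in r..s, m τ :=
    hW.norm_integral_comp_le (fun _ => x) hrs
  exact hmap _ _ (locallyIntegrable_of_norm_le
    (hW.measurable_timeIntegral r s).aestronglyMeasurable hbound)
    (hW.isDivFree_timeIntegral hdiv hrs) hbound hδ

theorem exists_mollified_flow (hW : IsDominated W m) (hdiv : ∀ᵐ t, IsDivFree μ (W t))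
    (hρ : IsMollifier μ ρ) {T : ℝ} (hT : 0 ≤ T) {κ : ℝ} (hκ : 0 < κ) :
    ∃ X, IsCompressibleFlow μ m (fun _ => ENNReal.ofReal (Real.exp 1)) T X ∧
      ∀ x, ∀ t ∈ Icc 0 T, ‖X t x - x - ∫ r in (0 : ℝ)..t, mollify μ ρ (W r) (X r x)‖ ≤ κ := by
  have hρ₁ : ContDiff ℝ 1 ρ := hρ.contDiff.of_le (by simp)
  set M := ∫ τ in (0 : ℝ)..T, m τ
  set L := ∫ z, ‖fderiv ℝ ρ z‖ ∂μ
  have hM : 0 ≤ M := hW.integral_nonneg hT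
  have hL : 0 ≤ L := integral_nonneg fun _ => norm_nonneg _
  have hmM {s : ℝ} (hs : s ∈ Icc 0 T) : ∫ τ in (0 : ℝ)..s, m τ ≤ M + 1 :=
    (hW.integral_mono_interval le_rfl hs.1 hs.2).trans (lt_add_one M).le
  obtain ⟨δ₀, hδ₀, hmap⟩ := exists_map_id_add_integral_mollify_le_exp hW hdiv hρ
    (show 0 < (M + 1)⁻¹ by positivity)
  have hlip (r : ℝ) (y z : E) : ‖mollify μ ρ (W r) y - mollify μ ρ (W r) z‖ ≤
      L * m r * ‖y - z‖ :=
    norm_mollify_sub_le hρ₁ hρ.hasCompactSupport (locallyIntegrable_of_norm_le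
      (hW.measurable.of_uncurry_left).aestronglyMeasurable (hW.norm_le r)) (hW.norm_le r) y z
  set δ := min δ₀ (κ / (M + 1) / (L + 1))
  have hc : L * δ ≤ κ / (M + 1) :=
    calc L * δ ≤ (L + 1) * (κ / (M + 1) / (L + 1)) := by
          gcongr
          · exact (lt_add_one L).le
          · exact min_le_right _ _
      _ = κ / (M + 1) := by field_simp
  obtain ⟨X, hX, herr⟩ :=
    exists_isCompressibleFlow (hW.mollify hρ) hL hlip (by positivity) hc
      (fun r s hrs hδ => hmap r s hrs (hδ.trans (min_le_left _ _))) hT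
  refine ⟨X, { hX with map_le := fun s hs => (hX.map_le s hs).trans ?_ }, fun x t ht => ?_⟩
  · gcongr
    rw [inv_mul_le_one₀ (by positivity)]
    exact hmM hs
  · have h := herr x t ht
    simp only [hX.apply_zero] at h
    calc _ ≤ κ / (M + 1) * ∫ τ in (0 : ℝ)..t, m τ := h
      _ ≤ κ / (M + 1) * (M + 1) := by
          gcongr
          exact hmM ht
      _ = κ := div_mul_cancel₀ _ (by positivity)

end MollifiedFlow

section Control

theorem exists_le_lowerSemicontinuous_lintegral_ne_top {α : Type*} [TopologicalSpace α]
    [MeasurableSpace α] [BorelSpace α] {ν : Measure α} [ν.WeaklyRegular]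
    {f : α → ℝ≥0∞} (hf : Measurable f) (hfi : ∫⁻ p, f p ∂ν ≠ ⊤) {N : Set α} (hN : ν N = 0) :
    ∃ g : α → ℝ≥0∞, (∀ p, f p ≤ g p) ∧ LowerSemicontinuous g ∧ ∫⁻ p, g p ∂ν ≠ ⊤ ∧
      ∀ p ∈ N, g p = ⊤ := by
  have hN' : MeasurableSet (toMeasurable ν N) := measurableSet_toMeasurable _ _
  obtain ⟨g, hfg, hg, hgi⟩ := exists_le_lowerSemicontinuous_lintegral_ge ν
    (fun p => f p + (toMeasurable ν N).indicator (fun _ => ⊤) p)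
    (hf.add (measurable_const.indicator hN')) one_ne_zero
  refine ⟨g, fun p => le_self_add.trans (hfg p), hg, ?_, fun p hp => ?_⟩
  · rw [lintegral_add_left hf, lintegral_indicator hN',
      setLIntegral_measure_zero _ _ (by rw [measure_toMeasurable, hN]), add_zero] at hgi
    exact ne_top_of_le_ne_top (by finiteness) hgi
  · refine top_le_iff.1 (le_trans ?_ (hfg p))
    rw [indicator_of_mem (subset_toMeasurable ν N hp), add_top]

variable {E F : Type*} [NormedAddCommGroup E] [NormedSpace ℝ E] [FiniteDimensional ℝ E]
  [MeasurableSpace E] [BorelSpace E] (μ : Measure E) [μ.IsAddHaarMeasure] [NormedAddCommGroup F]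
  [NormedSpace ℝ F] [CompleteSpace F]

variable (F) in
theorem exists_seq_isMollifier_ae_tendsto :
    ∃ ρ : ℕ → E → ℝ, (∀ n, IsMollifier μ (ρ n)) ∧ ∀ U : E → F, LocallyIntegrable U μ →
      ∀ᵐ x ∂μ, Tendsto (fun n => mollify μ (ρ n) U x) atTop (𝓝 (U x)) := by
  let φ (n : ℕ) : ContDiffBump (0 : E) :=
    ⟨1 / (n + 1), 2 * (1 / (n + 1)), by positivity, lt_two_mul_self (by positivity)⟩
  have hφ : Tendsto (fun n => (φ n).rOut) atTop (𝓝 0) := by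
    simpa [φ] using (tendsto_one_div_add_atTop_nhds_zero_nat (𝕜 := ℝ)).const_mul 2
  exact ⟨fun n => (φ n).normed μ, fun n => ⟨(φ n).contDiff_normed, (φ n).hasCompactSupport_normed,
    (φ n).nonneg_normed, (φ n).integral_normed⟩, fun U hU =>
    ContDiffBump.ae_convolution_tendsto_right_of_locallyIntegrable (K := 2) hφ
      (Eventually.of_forall fun _ => le_rfl) hU⟩

variable {μ} [MeasurableSpace F] [BorelSpace F] [SecondCountableTopology F] {W : ℝ → E → F}
  {m : ℝ → ℝ}

theorem exists_isMollifier_lintegral_le (hW : IsDominated W m) {K : Set E} (hK : IsCompact K)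
    {ε : ℝ≥0∞} (hε : ε ≠ 0) :
    ∃ ρ, IsMollifier μ ρ ∧
      ∫⁻ p, ‖mollify μ ρ (W p.1) p.2 - W p.1 p.2‖ₑ ∂(volume.prod (μ.restrict K)) ≤ ε := by
  obtain ⟨ρ, hρ, hlim⟩ := exists_seq_isMollifier_ae_tendsto F μ
  have hmoll (n : ℕ) : Measurable fun p : ℝ × E => mollify μ (ρ n) (W p.1) p.2 :=
    (hW.mollify (hρ n)).measurable
  have hae : ∀ᵐ p ∂((volume : Measure ℝ).prod (μ.restrict K)),
      Tendsto (fun n => mollify μ (ρ n) (W p.1) p.2) atTop (𝓝 (W p.1 p.2)) := by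
    refine (Measure.ae_prod_iff_ae_ae (measurableSet_tendsto_fun hmoll hW.measurable)).2 ?_
    exact ae_of_all _ fun t => ae_restrict_of_ae (hlim _ (locallyIntegrable_of_norm_le
      hW.measurable.of_uncurry_left.aestronglyMeasurable (hW.norm_le t)))
  have : IsFiniteMeasure (μ.restrict K) := isFiniteMeasure_restrict.2 hK.measure_ne_top
  have h := tendsto_lintegral_norm_of_dominated_convergence
    (fun n => (hmoll n).aestronglyMeasurable) (hW.integrable.comp_fst _).2
    (fun n => ae_of_all _ fun p => (hW.mollify (hρ n)).norm_le p.1 p.2) hae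
  simp only [ofReal_norm] at h
  obtain ⟨n, hn⟩ := (h.eventually_le_const hε.bot_lt).exists
  exact ⟨ρ n, hρ n, hn⟩

theorem exists_seq_isMollifier_lintegral_tsum_ne_top (hW : IsDominated W m) {K : Set E}
    (hK : IsCompact K) :
    ∃ ρ : ℕ → E → ℝ, (∀ k, IsMollifier μ (ρ k)) ∧
      ∫⁻ p, ∑' k, 2 ^ k * ‖mollify μ (ρ k) (W p.1) p.2 - W p.1 p.2‖ₑ
        ∂(volume.prod (μ.restrict K)) ≠ ⊤ := by
  choose ρ hρ hle using fun k : ℕ => exists_isMollifier_lintegral_le (μ := μ) hW hK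
    (show (4⁻¹ : ℝ≥0∞) ^ k ≠ 0 by simp)
  have he (k : ℕ) : Measurable fun p : ℝ × E => ‖mollify μ (ρ k) (W p.1) p.2 - W p.1 p.2‖ₑ :=
    ((hW.mollify (hρ k)).measurable.sub hW.measurable).enorm
  refine ⟨ρ, hρ, ?_⟩
  rw [lintegral_tsum fun k => ((he k).const_mul _).aemeasurable]
  refine ne_top_of_le_ne_top ENNReal.ofNat_ne_top (b := 2) ?_
  calc ∑' k, ∫⁻ p, 2 ^ k * ‖mollify μ (ρ k) (W p.1) p.2 - W p.1 p.2‖ₑ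
        ∂(volume.prod (μ.restrict K))
      ≤ ∑' k : ℕ, (2⁻¹ : ℝ≥0∞) ^ k := ENNReal.tsum_le_tsum fun k => by
        rw [lintegral_const_mul _ (he k)]
        refine (mul_le_mul_right (hle k) _).trans_eq ?_
        rw [← mul_pow, show (4 : ℝ≥0∞) = 2 * 2 by norm_num,
          ENNReal.mul_inv (by simp) (by simp), ← mul_assoc,
          ENNReal.mul_inv_cancel (by simp) (by simp), one_mul]
    _ = 2 := by rw [ENNReal.tsum_geometric, ENNReal.one_sub_inv_two, inv_inv]

/-- The spatially continuous fields `b k` approximate `W` on `K` with errors at most `2⁻ᵏ g`, where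
the function `g` of time and space is lower semicontinuous, so that errors along curves can be
followed through limits of curves. -/
structure IsControlledApprox (W : ℝ → E → F) (m : ℝ → ℝ) (K : Set E) (g : ℝ × E → ℝ≥0∞)
    (b : ℕ → ℝ → E → F) : Prop where
  isDominated : ∀ k, IsDominated (b k) m
  continuous : ∀ k t, Continuous (b k t)
  lowerSemicontinuous : LowerSemicontinuous g
  enorm_sub_le : ∀ k t, ∀ x ∈ K, ‖b k t x - W t x‖ₑ ≤ 2⁻¹ ^ k * g (t, x)

theorem exists_isControlledApprox (hW : IsDominated W m) {K : Set E} (hK : IsCompact K)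
    {N : Set (ℝ × E)} (hN : volume.prod μ N = 0) :
    ∃ (ρ : ℕ → E → ℝ) (g : ℝ × E → ℝ≥0∞), (∀ k, IsMollifier μ (ρ k)) ∧
      IsControlledApprox W m K g (fun k t => mollify μ (ρ k) (W t)) ∧
      ∫⁻ p, g p ∂(volume.prod μ) ≠ ⊤ ∧ ∀ p ∈ N, g p = ⊤ := by
  obtain ⟨ρ, hρ, hint⟩ := exists_seq_isMollifier_lintegral_tsum_ne_top (μ := μ) hW hK
  set e : ℕ → ℝ × E → ℝ≥0∞ := fun k p => ‖mollify μ (ρ k) (W p.1) p.2 - W p.1 p.2‖ₑ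
  have he (k : ℕ) : Measurable (e k) := ((hW.mollify (hρ k)).measurable.sub hW.measurable).enorm
  have hslab : MeasurableSet (univ ×ˢ K : Set (ℝ × E)) := .prod .univ hK.measurableSet
  rw [← Measure.restrict_univ (μ := (volume : Measure ℝ)), Measure.prod_restrict,
    ← lintegral_indicator hslab] at hint
  obtain ⟨g, hfg, hg, hgi, hgN⟩ := exists_le_lowerSemicontinuous_lintegral_ne_top
    ((Measurable.tsum fun k => (he k).const_mul _).indicator hslab) hint hN
  refine ⟨ρ, g, hρ, ⟨fun k => hW.mollify (hρ k), fun k t => ?_, hg, fun k t x hx => ?_⟩, hgi, hgN⟩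
  · have hW_loc : LocallyIntegrable (W t) μ := locallyIntegrable_of_norm_le
      hW.measurable.of_uncurry_left.aestronglyMeasurable (hW.norm_le t)
    exact continuous_iff_continuousAt.2 fun x => (hasFDerivAt_mollify
      ((hρ k).contDiff.of_le (by simp)) (hρ k).hasCompactSupport hW_loc x).continuousAt
  · have hle : 2 ^ k * e k (t, x) ≤ g (t, x) := by
      have h := hfg (t, x)
      rw [indicator_of_mem (mk_mem_prod (mem_univ t) hx)] at h
      exact (ENNReal.le_tsum (f := fun k => 2 ^ k * e k (t, x)) k).trans h
    calc e k (t, x) = 2⁻¹ ^ k * (2 ^ k * e k (t, x)) := by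
          rw [← mul_assoc, ← mul_pow, ENNReal.inv_mul_cancel (by simp) (by simp), one_pow, one_mul]
      _ ≤ 2⁻¹ ^ k * g (t, x) := by gcongr

end Control

section Compactness

theorem lintegral_le_of_tendsto_of_lowerSemicontinuous {Ω α : Type*} [MeasurableSpace Ω]
    {ν : Measure Ω} [TopologicalSpace α] {g : α → ℝ≥0∞} (hg : LowerSemicontinuous g)
    {f : ℕ → Ω → α} {f₀ : Ω → α} (hf : ∀ n, AEMeasurable (fun p => g (f n p)) ν)
    (hlim : ∀ᵐ p ∂ν, Tendsto (f · p) atTop (𝓝 (f₀ p))) {L : ℝ≥0∞}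
    (hL : ∀ n, ∫⁻ p, g (f n p) ∂ν ≤ L) : ∫⁻ p, g (f₀ p) ∂ν ≤ L :=
  calc ∫⁻ p, g (f₀ p) ∂ν ≤ ∫⁻ p, liminf (fun n => g (f n p)) atTop ∂ν :=
        lintegral_mono_ae (hlim.mono fun p hp => (hg.le_liminf _).trans hp.liminf_le_liminf_comp)
    _ ≤ liminf (fun n => ∫⁻ p, g (f n p) ∂ν) atTop := lintegral_liminf_le' hf
    _ ≤ L := liminf_le_of_frequently_le' (Frequently.of_forall hL)

variable {E F : Type*} [NormedAddCommGroup E] [MeasurableSpace E]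
  [NormedAddCommGroup F] [NormedSpace ℝ F] [MeasurableSpace F] [BorelSpace F]
  [SecondCountableTopology F] {m : ℝ → ℝ}

theorem IsDominated.tendsto_integral_comp {b : ℝ → E → F} (hb : IsDominated b m)
    (hbc : ∀ t, Continuous (b t)) {γ : ℕ → ℝ → E} {β : ℝ → E} (hγ : ∀ n, Measurable (γ n))
    (hlim : ∀ t, Tendsto (γ · t) atTop (𝓝 (β t))) (r s : ℝ) :
    Tendsto (fun n => ∫ τ in r..s, b τ (γ n τ)) atTop (𝓝 (∫ τ in r..s, b τ (β τ))) :=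
  intervalIntegral.tendsto_integral_filter_of_dominated_convergence m
    (Eventually.of_forall fun n => (hb.integrable_comp (hγ n)).1.restrict)
    (Eventually.of_forall fun _ => ae_of_all _ fun t _ => hb.norm_le t _)
    (hb.intervalIntegrable r s)
    (ae_of_all _ fun t _ => ((hbc t).tendsto _).comp (hlim t))

namespace IsControlledApprox

variable {W : ℝ → E → F} {K : Set E} {g : ℝ × E → ℝ≥0∞} {b : ℕ → ℝ → E → F} {T t : ℝ}

theorem enorm_integral_sub_le (h : IsControlledApprox W m K g b) (hW : IsDominated W m) {γ : ℝ → E}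
    (hγ : Measurable γ) (hγK : ∀ t, γ t ∈ K) (ht : t ∈ Icc 0 T) (k : ℕ) :
    ‖(∫ r in (0 : ℝ)..t, b k r (γ r)) - ∫ r in (0 : ℝ)..t, W r (γ r)‖ₑ ≤
      2⁻¹ ^ k * ∫⁻ r in Icc 0 T, g (r, γ r) := by
  rw [← intervalIntegral.integral_sub ((h.isDominated k).intervalIntegrable_comp hγ 0 t)
    (hW.intervalIntegrable_comp hγ 0 t), intervalIntegral.integral_of_le ht.1]
  calc _ ≤ ∫⁻ r in Ioc 0 t, ‖b k r (γ r) - W r (γ r)‖ₑ := enorm_integral_le_lintegral_enorm _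
    _ ≤ ∫⁻ r in Icc 0 T, ‖b k r (γ r) - W r (γ r)‖ₑ :=
        lintegral_mono_set (Ioc_subset_Icc_self.trans (Icc_subset_Icc_right ht.2))
    _ ≤ ∫⁻ r in Icc 0 T, 2⁻¹ ^ k * g (r, γ r) :=
        lintegral_mono fun r => h.enorm_sub_le k r _ (hγK r)
    _ = 2⁻¹ ^ k * ∫⁻ r in Icc 0 T, g (r, γ r) := lintegral_const_mul' _ _ (by simp)

theorem enorm_sub_sub_integral_le (h : IsControlledApprox W m K g b) (hW : IsDominated W m)
    {γ : ℝ → E} (hγ : Measurable γ) (hγK : ∀ t, γ t ∈ K) {L : ℝ≥0∞}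
    (hL : ∫⁻ r in Icc 0 T, g (r, γ r) ≤ L) {y : F} (ht : t ∈ Icc 0 T) {k : ℕ}
    (hy : ‖y - ∫ r in (0 : ℝ)..t, b k r (γ r)‖ₑ ≤ 2⁻¹ ^ k) (j : ℕ) :
    ‖y - ∫ r in (0 : ℝ)..t, b j r (γ r)‖ₑ ≤ 2⁻¹ ^ k * (1 + L) + 2⁻¹ ^ j * L := by
  have herr (i : ℕ) := (h.enorm_integral_sub_le hW hγ hγK ht i).trans (mul_le_mul_right hL _)
  rw [mul_add, mul_one]
  calc ‖y - ∫ r in (0 : ℝ)..t, b j r (γ r)‖ₑ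
      = ‖(y - ∫ r in (0 : ℝ)..t, b k r (γ r)) + ((∫ r in (0 : ℝ)..t, b k r (γ r)) -
          ∫ r in (0 : ℝ)..t, W r (γ r)) - ((∫ r in (0 : ℝ)..t, b j r (γ r)) -
          ∫ r in (0 : ℝ)..t, W r (γ r))‖ₑ := by congr 1; abel
    _ ≤ 2⁻¹ ^ k + 2⁻¹ ^ k * L + 2⁻¹ ^ j * L :=
        _root_.enorm_sub_le.trans (add_le_add (enorm_add_le_of_le hy (herr k)) (herr j))

theorem enorm_sub_sub_integral_le_of_tendsto (h : IsControlledApprox W m K g b)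
    (hW : IsDominated W m) {γ : ℕ → ℝ → E} {β : ℝ → E} (hγ : ∀ n, Measurable (γ n))
    (hγK : ∀ n t, γ n t ∈ K) {L : ℝ≥0∞} (hL : ∀ n, ∫⁻ r in Icc 0 T, g (r, γ n r) ≤ L)
    (hL_top : L ≠ ⊤) (hlim : ∀ t, Tendsto (γ · t) atTop (𝓝 (β t))) {y : ℕ → F} {y₀ : F}
    (hylim : Tendsto y atTop (𝓝 y₀)) (ht : t ∈ Icc 0 T) {k : ℕ → ℕ} (hk : Tendsto k atTop atTop)
    (hy : ∀ n, ‖y n - ∫ r in (0 : ℝ)..t, b (k n) r (γ n r)‖ₑ ≤ 2⁻¹ ^ k n) (j : ℕ) :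
    ‖y₀ - ∫ r in (0 : ℝ)..t, b j r (β r)‖ₑ ≤ 2⁻¹ ^ j * L := by
  have hpow : Tendsto (fun n => (2⁻¹ : ℝ≥0∞) ^ k n) atTop (𝓝 0) :=
    (ENNReal.tendsto_pow_atTop_nhds_zero_of_lt_one (by simp)).comp hk
  have hrhs := (ENNReal.Tendsto.mul_const hpow (b := 1 + L) (.inr (by finiteness))).add_const
    (2⁻¹ ^ j * L)
  rw [zero_mul, zero_add] at hrhs
  exact le_of_tendsto_of_tendsto'
    (hylim.sub ((h.isDominated j).tendsto_integral_comp (h.continuous j) hγ hlim 0 t)).enorm hrhs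
    fun n => h.enorm_sub_sub_integral_le hW (hγ n) (hγK n) (hL n) ht (hy n) j

theorem eq_integral_of_enorm_sub_le (h : IsControlledApprox W m K g b) (hW : IsDominated W m)
    {β : ℝ → E} (hβ : Measurable β) (hβK : ∀ t, β t ∈ K) {L : ℝ≥0∞} (hL_top : L ≠ ⊤)
    (hL : ∫⁻ r in Icc 0 T, g (r, β r) ≤ L) (ht : t ∈ Icc 0 T) {y : F}
    (hy : ∀ j, ‖y - ∫ r in (0 : ℝ)..t, b j r (β r)‖ₑ ≤ 2⁻¹ ^ j * L) :
    y = ∫ r in (0 : ℝ)..t, W r (β r) := by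
  rw [← sub_eq_zero, ← enorm_eq_zero, ← nonpos_iff_eq_zero]
  have hlim : Tendsto (fun j : ℕ => (2⁻¹ : ℝ≥0∞) ^ j * L + 2⁻¹ ^ j * L) atTop (𝓝 0) := by
    have hpow := ENNReal.Tendsto.mul_const (b := L)
      (ENNReal.tendsto_pow_atTop_nhds_zero_of_lt_one (r := 2⁻¹) (by simp)) (.inr hL_top)
    simpa using hpow.add hpow
  refine ge_of_tendsto' hlim fun j => ?_
  rw [← sub_add_sub_cancel y (∫ r in (0 : ℝ)..t, b j r (β r))]
  exact enorm_add_le_of_le (hy j)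
    ((h.enorm_integral_sub_le hW hβ hβK ht j).trans (mul_le_mul_right hL _))

theorem exists_solution [NormedSpace ℝ E] [BorelSpace E] [SecondCountableTopology E] {W : ℝ → E → E}
    {b : ℕ → ℝ → E → E} (h : IsControlledApprox W m K g b) (hW : IsDominated W m)
    (hK : IsCompact K) {γ : ℕ → ℝ → E} (hγ : ∀ n, HasSpeedLE m (γ n)) (hγK : ∀ n t, γ n t ∈ K)
    {L : ℝ≥0∞} (hL_top : L ≠ ⊤) (hL : ∀ n, ∫⁻ r in Icc 0 T, g (r, γ n r) ≤ L) {x : E} {k : ℕ → ℕ}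
    (hk : StrictMono k) (hsol : ∀ n, ∀ t ∈ Icc 0 T,
      ‖γ n t - x - ∫ r in (0 : ℝ)..t, b (k n) r (γ n r)‖ₑ ≤ 2⁻¹ ^ k n) :
    ∃ β : ℝ → E, Continuous β ∧ (∀ t ∈ Icc 0 T, β t = x + ∫ r in (0 : ℝ)..t, W r (β r)) ∧
      ∫⁻ r in Icc 0 T, g (r, β r) ≤ L := by
  obtain ⟨φ, β, hφ, hβ, hlim⟩ :=
    exists_subseq_tendsto_of_hasSpeedLE hW.intervalIntegrable hK hγ hγK
  have hγm (n : ℕ) : Measurable (γ n) := ((hγ n).continuous hW.intervalIntegrable).measurable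
  have hβK (t : ℝ) : β t ∈ K := hK.isClosed.mem_of_tendsto (hlim t)
    (Eventually.of_forall fun n => hγK _ _)
  have hβL : ∫⁻ r in Icc 0 T, g (r, β r) ≤ L :=
    lintegral_le_of_tendsto_of_lowerSemicontinuous h.lowerSemicontinuous
      (f := fun n r => (r, γ (φ n) r))
      (fun n => (h.lowerSemicontinuous.measurable.comp
        (measurable_id.prodMk (hγm (φ n)))).aemeasurable)
      (ae_of_all _ fun r => tendsto_const_nhds.prodMk_nhds (hlim r)) fun n => hL (φ n)
  refine ⟨β, hβ, fun t ht => ?_, hβL⟩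
  rw [← sub_eq_iff_eq_add']
  exact h.eq_integral_of_enorm_sub_le hW hβ.measurable hβK hL_top hβL ht
    (h.enorm_sub_sub_integral_le_of_tendsto hW (fun n => hγm (φ n)) (fun n => hγK (φ n))
      (fun n => hL (φ n)) hL_top hlim ((hlim t).sub_const x) ht
      (hk.comp hφ).tendsto_atTop fun n => hsol (φ n) t ht)

end IsControlledApprox

end Compactness

section Existence

theorem lintegral_lintegral_comp_le {Ω E F : Type*} [MeasurableSpace Ω] [MeasurableSpace E]
    [MeasurableSpace F] {ν : Measure Ω} [SFinite ν] {μ : Measure E} [SFinite μ] {μ' : Measure F}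
    [SFinite μ'] {X : Ω → E → F} (hX : Measurable (Function.uncurry X)) {c : ℝ≥0∞}
    (hmap : ∀ᵐ s ∂ν, μ.map (X s) ≤ c • μ') {f : Ω × F → ℝ≥0∞} (hf : Measurable f) :
    ∫⁻ x, ∫⁻ s, f (s, X s x) ∂ν ∂μ ≤ c * ∫⁻ p, f p ∂(ν.prod μ') := by
  have hfX : Measurable (Function.uncurry fun x s => f (s, X s x)) :=
    hf.comp (measurable_snd.prodMk (hX.comp measurable_swap))
  rw [lintegral_lintegral_swap hfX.aemeasurable, lintegral_prod _ hf.aemeasurable,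
    ← lintegral_const_mul _ hf.lintegral_prod_right']
  refine lintegral_mono_ae (hmap.mono fun s hs => ?_)
  calc ∫⁻ x, f (s, X s x) ∂μ = ∫⁻ y, f (s, y) ∂μ.map (X s) :=
        (lintegral_map (hf.comp measurable_prodMk_left) hX.of_uncurry_left).symm
    _ ≤ ∫⁻ y, f (s, y) ∂(c • μ') := lintegral_mono' hs le_rfl
    _ = c * ∫⁻ y, f (s, y) ∂μ' := lintegral_smul_measure _ _

theorem ae_exists_strictMono_bddAbove {Ω : Type*} [MeasurableSpace Ω] {ν : Measure Ω}
    {J : ℕ → Ω → ℝ≥0∞} (hJ : ∀ n, Measurable (J n)) {C : ℝ≥0∞} (hC : C ≠ ⊤)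
    (hJC : ∀ n, ∫⁻ x, J n x ∂ν ≤ C) :
    ∀ᵐ x ∂ν, ∃ φ : ℕ → ℕ, StrictMono φ ∧ ∃ L ≠ ⊤, ∀ n, J (φ n) x ≤ L := by
  have hliminf : ∫⁻ x, liminf (J · x) atTop ∂ν ≤ C :=
    (lintegral_liminf_le hJ).trans (liminf_le_of_frequently_le' (Frequently.of_forall hJC))
  filter_upwards [ae_lt_top (.liminf hJ) (ne_top_of_le_ne_top hC hliminf)] with x hx
  obtain ⟨L, hxL, hL⟩ := exists_between hx
  obtain ⟨φ, hφ, hle⟩ := extraction_of_frequently_atTop (frequently_lt_of_liminf_lt (h := hxL))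
  exact ⟨φ, hφ, L, hL.ne, fun n => (hle n).le⟩

theorem IsCompressibleFlow.measurable_uncurry {E : Type*} [NormedAddCommGroup E]
    [MeasurableSpace E] [BorelSpace E] {μ : Measure E} {m : ℝ → ℝ}
    {C : ℝ → ℝ≥0∞} {a : ℝ} {X : ℝ → E → E} (hX : IsCompressibleFlow μ m C a X)
    (hm : ∀ r s, IntervalIntegrable m volume r s) : Measurable (Function.uncurry X) :=
  measurable_uncurry_of_continuous_of_measurable (fun x => (hX.hasSpeedLE x).continuous hm)
    hX.measurable

variable {E : Type*} [NormedAddCommGroup E] [NormedSpace ℝ E] [MeasurableSpace E] {μ : Measure E}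
  {W : ℝ → E → E} {m : ℝ → ℝ} {N : Set (ℝ × E)}

/-- On the time set `I`, the continuous curve `γ` solves `γ' = W (t, γ)` in integral form with
`γ S = x`, and its graph meets `N` only in a null set of times. -/
structure IsSolutionAvoiding (W : ℝ → E → E) (N : Set (ℝ × E)) (I : Set ℝ) (S : ℝ) (x : E)
    (γ : ℝ → E) : Prop where
  continuous : Continuous γ
  eq_add_integral : ∀ t ∈ I, γ t = x + ∫ r in S..t, W r (γ r)
  ae_notMem : ∀ᵐ t, t ∈ I → (t, γ t) ∉ N

variable [BorelSpace E] [FiniteDimensional ℝ E] [μ.IsAddHaarMeasure]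

theorem exists_seq_mollified_flow (hW : IsDominated W m) (hdiv : ∀ᵐ t, IsDivFree μ (W t))
    {ρ : ℕ → E → ℝ} (hρ : ∀ k, IsMollifier μ (ρ k)) {T : ℝ} (hT : 0 ≤ T) :
    ∃ X : ℕ → ℝ → E → E,
      (∀ k, IsCompressibleFlow μ m (fun _ => ENNReal.ofReal (Real.exp 1)) T (X k)) ∧
      ∀ k x, ∀ t ∈ Icc 0 T,
        ‖X k t x - x - ∫ r in (0 : ℝ)..t, mollify μ (ρ k) (W r) (X k r x)‖ₑ ≤ 2⁻¹ ^ k := by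
  choose X hX herr using fun k =>
    exists_mollified_flow hW hdiv (hρ k) hT (κ := 2⁻¹ ^ k) (by positivity)
  refine ⟨X, hX, fun k x t ht => ?_⟩
  rw [← ofReal_norm]
  refine (ENNReal.ofReal_le_ofReal (herr k x t ht)).trans_eq ?_
  rw [ENNReal.ofReal_pow (by norm_num), ENNReal.ofReal_inv_of_pos two_pos, ENNReal.ofReal_ofNat]

theorem ae_exists_isSolutionAvoiding_of_mem_closedBall (hW : IsDominated W m)
    (hdiv : ∀ᵐ t, IsDivFree μ (W t)) {T : ℝ} (hT : 0 ≤ T) (hN : volume.prod μ N = 0) (R : ℝ) :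
    ∀ᵐ x ∂μ, x ∈ Metric.closedBall 0 R → ∃ γ, IsSolutionAvoiding W N (Icc 0 T) 0 x γ := by
  obtain ⟨ρ, g, hρ, hg, hgi, hgN⟩ := exists_isControlledApprox hW
    (isCompact_closedBall (0 : E) (R + ∫ τ, m τ)) hN
  obtain ⟨X, hX, herr⟩ := exists_seq_mollified_flow hW hdiv hρ hT
  have hXm (k : ℕ) : Measurable (Function.uncurry (X k)) :=
    (hX k).measurable_uncurry hW.intervalIntegrable
  have hgm : Measurable g := hg.lowerSemicontinuous.measurable
  have hJ (k : ℕ) : Measurable fun x => ∫⁻ r in Icc 0 T, g (r, X k r x) :=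
    Measurable.lintegral_prod_right' (f := fun q : E × ℝ => g (q.2, X k q.2 q.1))
      (hgm.comp (measurable_snd.prodMk ((hXm k).comp measurable_swap)))
  have hJC (k : ℕ) : ∫⁻ x, (∫⁻ r in Icc 0 T, g (r, X k r x)) ∂μ ≤
      ENNReal.ofReal (Real.exp 1) * ∫⁻ p, g p ∂(volume.prod μ) :=
    (lintegral_lintegral_comp_le (hXm k)
      (ae_restrict_of_forall_mem measurableSet_Icc (hX k).map_le) hgm).trans
      (by gcongr; exact Measure.restrict_le_self)
  filter_upwards [ae_exists_strictMono_bddAbove hJ (ENNReal.mul_ne_top ENNReal.ofReal_ne_top hgi)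
    hJC] with x ⟨φ, hφ, L, hL_top, hL⟩ hx
  have hball (k : ℕ) (t : ℝ) : X k t x ∈ Metric.closedBall (0 : E) (R + ∫ τ, m τ) := by
    have hdist := ((hX k).hasSpeedLE x).dist_le_integral hW.integrable hW.nonneg t 0
    rw [(hX k).apply_zero] at hdist
    exact (dist_triangle _ x _).trans (by linarith [Metric.mem_closedBall.1 hx])
  obtain ⟨β, hβ, hsol, hβL⟩ := hg.exists_solution hW (isCompact_closedBall _ _)
    (fun n => (hX (φ n)).hasSpeedLE x) (fun n => hball (φ n)) hL_top hL hφ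
    fun n => herr (φ n) x
  have hgβ : ∀ᵐ t, t ∈ Icc 0 T → g (t, β t) < ⊤ := (ae_restrict_iff' measurableSet_Icc).1
    (ae_lt_top (hgm.comp (measurable_id.prodMk hβ.measurable)) (ne_top_of_le_ne_top hL_top hβL))
  exact ⟨β, hβ, hsol, hgβ.mono fun t ht htI htN => (ht htI).ne (hgN _ htN)⟩

theorem ae_exists_isSolutionAvoiding (hW : IsDominated W m) (hdiv : ∀ᵐ t, IsDivFree μ (W t))
    {T : ℝ} (hT : 0 ≤ T) (hN : volume.prod μ N = 0) :
    ∀ᵐ x ∂μ, ∃ γ, IsSolutionAvoiding W N (Icc 0 T) 0 x γ := by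
  filter_upwards [ae_all_iff.2 fun R : ℕ =>
    ae_exists_isSolutionAvoiding_of_mem_closedBall hW hdiv hT hN R] with x hx
  obtain ⟨R, hR⟩ := exists_nat_ge ‖x‖
  exact hx R (mem_closedBall_zero_iff.2 hR)

end Existence

section TimeChange

theorem quasiMeasurePreserving_add_mul (S : ℝ) {e : ℝ} (he : e ≠ 0) :
    Measure.QuasiMeasurePreserving (fun t => S + e * t) volume volume :=
  (measurePreserving_add_left volume S).quasiMeasurePreserving.comp
    ⟨measurable_const_mul e, by
      rw [Real.map_volume_mul_left he]
      exact Measure.smul_absolutelyContinuous⟩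

theorem IsDominated.smul_comp_add_mul {E F : Type*} [MeasurableSpace E] [NormedAddCommGroup F]
    [NormedSpace ℝ F] [MeasurableSpace F] [BorelSpace F] {W : ℝ → E → F} {m : ℝ → ℝ}
    (hW : IsDominated W m) (S : ℝ) {e : ℝ} (he : e ≠ 0) :
    IsDominated (fun t x => e • W (S + e * t) x) (fun t => |e| * m (S + e * t)) where
  measurable := (hW.measurable.comp (((measurable_fst.const_mul e).const_add S).prodMk
    measurable_snd)).const_smul e
  integrable := ((hW.integrable.comp_add_left S).comp_mul_left' he).const_mul _
  norm_le t x := by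
    rw [norm_smul, Real.norm_eq_abs]
    gcongr
    exact hW.norm_le _ x

variable {E : Type*} [NormedAddCommGroup E] [NormedSpace ℝ E] {W : ℝ → E → E} {N : Set (ℝ × E)}
  {S : ℝ} {x : E}

namespace IsSolutionAvoiding

theorem apply_eq {I : Set ℝ} {γ : ℝ → E} (h : IsSolutionAvoiding W N I S x γ) (hS : S ∈ I) :
    γ S = x := by
  simpa using h.eq_add_integral S hS

theorem of_smul_comp_add_mul {e : ℝ} (he : e ≠ 0) {I : Set ℝ} {γ : ℝ → E}
    (h : IsSolutionAvoiding (fun t x => e • W (S + e * t) x) (Prod.map (S + e * ·) id ⁻¹' N)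
      ((S + e * ·) ⁻¹' I) 0 x γ) :
    IsSolutionAvoiding W N I S x fun t => γ (e⁻¹ * (t - S)) := by
  have hcancel (t : ℝ) : S + e * (e⁻¹ * (t - S)) = t := by field_simp; ring
  refine ⟨h.continuous.comp (by fun_prop), fun t ht => ?_, ?_⟩
  · have hint := intervalIntegral.smul_integral_comp_add_mul (a := 0) (b := e⁻¹ * (t - S))
      (fun r => W r (γ (e⁻¹ * (r - S)))) e S
    simp only [hcancel, mul_zero, add_zero, add_sub_cancel_left, inv_mul_cancel_left₀ he] at hint
    rw [h.eq_add_integral _ (by rwa [mem_preimage, hcancel]), intervalIntegral.integral_smul, hint]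
  · have hae := (quasiMeasurePreserving_add_mul (-(e⁻¹ * S)) (inv_ne_zero he)).ae h.ae_notMem
    filter_upwards [hae] with t ht htI
    have ht_eq : -(e⁻¹ * S) + e⁻¹ * t = e⁻¹ * (t - S) := by ring
    simpa only [mem_preimage, ht_eq, Prod.map_apply, hcancel, id] using
      ht (by rwa [mem_preimage, ht_eq, hcancel])

theorem ite_le {a b : ℝ} (hS : S ∈ Icc a b) {γ₁ γ₂ : ℝ → E}
    (h₁ : IsSolutionAvoiding W N (Icc a S) S x γ₁) (h₂ : IsSolutionAvoiding W N (Icc S b) S x γ₂) :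
    IsSolutionAvoiding W N (Icc a b) S x fun t => if t ≤ S then γ₁ t else γ₂ t := by
  have hγ₁ : γ₁ S = x := h₁.apply_eq ⟨hS.1, le_rfl⟩
  have hγ₂ : γ₂ S = x := h₂.apply_eq ⟨le_rfl, hS.2⟩
  have hleft {t : ℝ} (ht : t ≤ S) : (if t ≤ S then γ₁ t else γ₂ t) = γ₁ t := if_pos ht
  have hright {t : ℝ} (ht : S ≤ t) : (if t ≤ S then γ₁ t else γ₂ t) = γ₂ t := by
    rcases ht.eq_or_lt with rfl | ht
    · rw [if_pos le_rfl, hγ₁, hγ₂]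
    · exact if_neg ht.not_ge
  refine ⟨h₁.continuous.if_le h₂.continuous continuous_id continuous_const ?_, fun t ht => ?_, ?_⟩
  · rintro t rfl
    exact hγ₁.trans hγ₂.symm
  · rcases le_total t S with htS | hSt
    · rw [hleft htS, h₁.eq_add_integral t ⟨ht.1, htS⟩]
      congr 1
      refine intervalIntegral.integral_congr fun r hr => ?_
      rw [uIcc_of_ge htS] at hr
      simp only [hleft hr.2]
    · rw [hright hSt, h₂.eq_add_integral t ⟨hSt, ht.2⟩]
      congr 1
      refine intervalIntegral.integral_congr fun r hr => ?_
      rw [uIcc_of_le hSt] at hr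
      simp only [hright hr.1]
  · filter_upwards [h₁.ae_notMem, h₂.ae_notMem] with t ht₁ ht₂ ht
    rcases le_total t S with htS | hSt
    · simpa only [hleft htS] using ht₁ ⟨ht.1, htS⟩
    · simpa only [hright hSt] using ht₂ ⟨hSt, ht.2⟩

end IsSolutionAvoiding

variable [FiniteDimensional ℝ E] [MeasurableSpace E] [BorelSpace E] {μ : Measure E}
  [μ.IsAddHaarMeasure] {m : ℝ → ℝ}

theorem ae_exists_isSolutionAvoiding_of_preimage_eq (hW : IsDominated W m)
    (hdiv : ∀ᵐ t, IsDivFree μ (W t)) (hN : volume.prod μ N = 0) {e : ℝ} (he : e ≠ 0) {I : Set ℝ}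
    {T : ℝ} (hT : 0 ≤ T) (hI : (S + e * ·) ⁻¹' I = Icc 0 T) :
    ∀ᵐ x ∂μ, ∃ γ, IsSolutionAvoiding W N I S x γ := by
  have hqmp := quasiMeasurePreserving_add_mul S he
  have hN' : volume.prod μ (Prod.map (S + e * ·) id ⁻¹' N) = 0 :=
    (QuasiMeasurePreserving.prodMap hqmp (.id μ)).preimage_null hN
  filter_upwards [ae_exists_isSolutionAvoiding (hW.smul_comp_add_mul S he)
    ((hqmp.ae hdiv).mono fun t ht => ht.const_smul e) hT hN'] with x ⟨γ, hγ⟩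
  rw [← hI] at hγ
  exact ⟨_, hγ.of_smul_comp_add_mul he⟩

theorem ae_exists_isSolutionAvoiding_through (hW : IsDominated W m)
    (hdiv : ∀ᵐ t, IsDivFree μ (W t)) (hN : volume.prod μ N = 0) {a b : ℝ} (hS : S ∈ Icc a b) :
    ∀ᵐ x ∂μ, ∃ γ, IsSolutionAvoiding W N (Icc a b) S x γ := by
  have hpast : (S + -1 * ·) ⁻¹' Icc a S = Icc 0 (S - a) := by simp [← sub_eq_add_neg]
  have hfuture : (S + 1 * ·) ⁻¹' Icc S b = Icc 0 (b - S) := by simp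
  filter_upwards [ae_exists_isSolutionAvoiding_of_preimage_eq hW hdiv hN (neg_ne_zero.2 one_ne_zero)
      (sub_nonneg.2 hS.1) hpast,
    ae_exists_isSolutionAvoiding_of_preimage_eq hW hdiv hN one_ne_zero (sub_nonneg.2 hS.2) hfuture]
    with x ⟨γ₁, hγ₁⟩ ⟨γ₂, hγ₂⟩
  exact ⟨_, hγ₁.ite_le hS hγ₂⟩

end TimeChange

section Reduction

theorem measurable_essSup_enorm {Ω E F : Type*} [MeasurableSpace Ω] [MeasurableSpace E]
    [NormedAddCommGroup F] [MeasurableSpace F] [OpensMeasurableSpace F] {μ : Measure E} [SFinite μ]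
    {V : Ω → E → F} (hV : Measurable (Function.uncurry V)) :
    Measurable fun t => essSup (fun x => ‖V t x‖ₑ) μ := by
  refine measurable_of_Iic fun c => ?_
  have hpreimage : (fun t => essSup (fun x => ‖V t x‖ₑ) μ) ⁻¹' Iic c =
      (fun t => μ (Prod.mk t ⁻¹' {p : Ω × E | c < ‖V p.1 p.2‖ₑ})) ⁻¹' {0} := by
    ext t
    have hnull : μ (Prod.mk t ⁻¹' {p : Ω × E | c < ‖V p.1 p.2‖ₑ}) = 0 ↔
        ∀ᵐ x ∂μ, ‖V t x‖ₑ ≤ c := by simp [ae_iff]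
    simp only [mem_preimage, mem_Iic, mem_singleton_iff, hnull]
    exact ⟨fun hle => (ae_le_essSup (f := fun x => ‖V t x‖ₑ)).mono fun x hx => hx.trans hle,
      essSup_le_of_ae_le c⟩
  rw [hpreimage]
  exact measurable_measure_prodMk_left (measurableSet_lt measurable_const hV.enorm)
    (measurableSet_singleton 0)

theorem exists_isDominated_modification {E F : Type*} [MeasurableSpace E] [NormedAddCommGroup F]
    [MeasurableSpace F] [BorelSpace F] {μ : Measure E} [SFinite μ] {V : ℝ → E → F}
    (hV : Measurable (Function.uncurry V)) {I : Set ℝ} (hI : MeasurableSet I)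
    (hbound : ∫⁻ t in I, essSup (fun x => ‖V t x‖ₑ) μ ≠ ⊤) :
    ∃ (W : ℝ → E → F) (m : ℝ → ℝ), IsDominated W m ∧ (∀ t ∉ I, ∀ x, W t x = 0) ∧
      volume.prod μ {p | p.1 ∈ I ∧ W p.1 p.2 ≠ V p.1 p.2} = 0 := by
  set M : ℝ → ℝ≥0∞ := fun t => essSup (fun x => ‖V t x‖ₑ) μ
  have hM : Measurable M := measurable_essSup_enorm hV
  set A : Set (ℝ × E) := {p | p.1 ∈ I ∧ M p.1 < ⊤ ∧ ‖V p.1 p.2‖ₑ ≤ M p.1}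
  have hA : MeasurableSet A := (measurable_fst hI).inter
    ((measurable_fst (measurableSet_lt hM measurable_const)).inter
      (measurableSet_le hV.enorm (hM.comp measurable_fst)))
  refine ⟨fun t x => A.indicator (Function.uncurry V) (t, x), I.indicator fun t => (M t).toReal,
    ⟨hV.indicator hA, (integrable_indicator_iff hI).2 (integrable_toReal_of_lintegral_ne_top
      hM.aemeasurable hbound), fun t x => ?_⟩,
    fun t ht _ => indicator_of_notMem (fun hx => ht hx.1) _, ?_⟩
  · by_cases hx : (t, x) ∈ A
    · rw [indicator_of_mem hx, indicator_of_mem hx.1, ← toReal_enorm]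
      exact ENNReal.toReal_mono hx.2.1.ne hx.2.2
    · rw [indicator_of_notMem hx, norm_zero]
      exact indicator_nonneg (fun _ _ => ENNReal.toReal_nonneg) t
  · refine measure_mono_null (t := Prod.fst ⁻¹' I ∩ Aᶜ)
      (fun p hp => ⟨hp.1, fun hpA => hp.2 (indicator_of_mem hpA _)⟩) ?_
    rw [Measure.measure_prod_null ((measurable_fst hI).inter hA.compl)]
    filter_upwards [(ae_restrict_iff' hI).1 (ae_lt_top hM hbound)] with t ht
    by_cases htI : t ∈ I
    · exact measure_mono_null (fun x hx hle => hx.2 ⟨htI, ht htI, hle⟩)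
        (ae_le_essSup (f := fun x => ‖V t x‖ₑ))
    · exact measure_mono_null (fun x hx => htI hx.1) measure_empty

variable {E : Type*} [NormedAddCommGroup E] [NormedSpace ℝ E] [MeasurableSpace E] {μ : Measure E}

theorem ae_isDivFree_modification [SFinite μ] {V W : ℝ → E → E} {I : Set ℝ} (hI : MeasurableSet I)
    (hV : ∀ᵐ t ∂volume.restrict I, IsDivFree μ (V t)) (hW₀ : ∀ t ∉ I, ∀ x, W t x = 0)
    (hWV : volume.prod μ {p | p.1 ∈ I ∧ W p.1 p.2 ≠ V p.1 p.2} = 0) :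
    ∀ᵐ t, IsDivFree μ (W t) := by
  filter_upwards [(ae_restrict_iff' hI).1 hV, Measure.measure_ae_null_of_prod_null hWV]
    with t ht hnull
  by_cases htI : t ∈ I
  · have hae : ∀ᵐ x ∂μ, ¬(t ∈ I ∧ W t x ≠ V t x) := measure_eq_zero_iff_ae_notMem.1 hnull
    exact (ht htI).congr_ae (hae.mono fun x hx => (of_not_not fun hne => hx ⟨htI, hne⟩).symm)
  · rw [show W t = fun _ => 0 from funext (hW₀ t htI)]
    exact isDivFree_zero

variable [FiniteDimensional ℝ E] [BorelSpace E]

theorem IsSolutionAvoiding.sub_eq_integral {W : ℝ → E → E} {m : ℝ → ℝ} (hW : IsDominated W m)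
    {N : Set (ℝ × E)} {I : Set ℝ} {S r t : ℝ} {x : E} {γ : ℝ → E}
    (h : IsSolutionAvoiding W N I S x γ) (hr : r ∈ I) (ht : t ∈ I) :
    γ t - γ r = ∫ s in r..t, W s (γ s) := by
  have hint (a b : ℝ) := hW.intervalIntegrable_comp h.continuous.measurable a b
  rw [h.eq_add_integral t ht, h.eq_add_integral r hr, add_sub_add_left_eq_sub,
    intervalIntegral.integral_interval_sub_left (hint _ _) (hint _ _)]

variable [μ.IsAddHaarMeasure]

theorem stmt13_general {a b : ℝ} (hab : a ≤ b) {V : ℝ → E → E}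
    (hV : Measurable (Function.uncurry V))
    (hbound : ∫⁻ t in Icc a b, essSup (fun x => ‖V t x‖ₑ) μ < ⊤)
    (hdiv : ∀ᵐ t ∂volume.restrict (Icc a b), IsDivFree μ (V t)) {S : ℝ} (hS : S ∈ Icc a b) :
    ∀ᵐ x ∂μ, ∃ γ : C(Icc a b, E),
      IntervalIntegrable (fun s => V s (γ (projIcc a b hab s))) volume a b ∧
      (∀ t : Icc a b, γ t - γ ⟨a, left_mem_Icc.mpr hab⟩ =
        ∫ s in a..t, V s (γ (projIcc a b hab s))) ∧
      γ ⟨S, hS⟩ = x := by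
  obtain ⟨W, m, hW, hW₀, hWV⟩ := exists_isDominated_modification hV measurableSet_Icc hbound.ne
  have hWdiv : ∀ᵐ t, IsDivFree μ (W t) := ae_isDivFree_modification measurableSet_Icc hdiv hW₀ hWV
  filter_upwards [ae_exists_isSolutionAvoiding_through hW hWdiv hWV hS] with x ⟨γ, hγ⟩
  have hγV : ∀ᵐ s, s ∈ Icc a b → W s (γ s) = V s (γ (projIcc a b hab s)) :=
    hγ.ae_notMem.mono fun s hs hsI => by
      rw [projIcc_of_mem hab hsI]
      exact of_not_not fun hne => hs hsI ⟨hsI, hne⟩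
  refine ⟨⟨fun t => γ t, hγ.continuous.comp continuous_subtype_val⟩, ?_, fun t => ?_,
    hγ.apply_eq hS⟩
  · refine (hW.intervalIntegrable_comp hγ.continuous.measurable a b).congr_ae ?_
    rw [uIoc_of_le hab]
    exact (ae_restrict_iff' measurableSet_Ioc).2
      (hγV.mono fun s hs hsI => hs (Ioc_subset_Icc_self hsI))
  · refine (hγ.sub_eq_integral hW (left_mem_Icc.2 hab) t.2).trans ?_
    refine intervalIntegral.integral_congr_ae (hγV.mono fun s hs hst => hs ?_)
    rw [uIoc_of_le t.2.1] at hst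
    exact ⟨hst.1.le, hst.2.trans t.2.2⟩

end Reduction

/-- if `V` is Borel, divergence-free and
`∫₀ᵀ‖V_t‖_∞dt < ∞`, then for each `S ∈ [0,T]` and Lebesgue-almost every
`x ∈ ℝ^d` there exists an ODE solution `γ` with `γ(S) = x`. -/
theorem stmt13 (d : ℕ) (T : ℝ) (hT : 0 ≤ T)
    (V : ℝ → EuclideanSpace ℝ (Fin d) → EuclideanSpace ℝ (Fin d))
    (hV : Measurable (Function.uncurry V))
    (hbound : (∫⁻ t in Set.Icc (0:ℝ) T, ⨆ x, (‖V t x‖₊ : ℝ≥0∞)) < ⊤)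
    (hdiv : ∀ t : ℝ, ∀ u : EuclideanSpace ℝ (Fin d) → ℝ,
      ContDiff ℝ (⊤ : ℕ∞) u → HasCompactSupport u →
      ∫ x, fderiv ℝ u x (V t x) = 0) :
    ∀ (S : ℝ) (hS : S ∈ Set.Icc (0:ℝ) T),
      ∀ᵐ x : EuclideanSpace ℝ (Fin d) ∂MeasureTheory.volume,
        ∃ γ : C(Set.Icc (0:ℝ) T, EuclideanSpace ℝ (Fin d)),
          IsSolution T hT V γ ∧ γ ⟨S, hS⟩ = x := fun _ hS =>
  (stmt13_general hT hV ((lintegral_mono fun t => essSup_le_of_ae_le _ (ae_of_all _ fun x =>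
    le_iSup (fun x => ‖V t x‖ₑ) x)).trans_lt hbound) (ae_of_all _ hdiv) hS).mono fun _ h =>
      h.imp fun _ => And.right
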